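/- Assume: if t₀ = min 𝕋 then f satisfies (H∞), (H^rd_loc-Lip) and (H^forw_stab); if t₀ = max 𝕋 then f satisfies (H∞), (H^ld_loc-Lip) and (H^back_regr); if t₀ ≠ inf 𝕋 and t₀ ≠ sup 𝕋 then f satisfies (H∞), (H^rd_loc-Lip), (H^forw_stab), (H^ld_loc-Lip) and (H^back_regr). Let (q,I_𝕋) be the maximal solution of (Δ-CP). Then either I_𝕋 = 𝕋, or: (1) if t₀ = min 𝕋 then I_𝕋 = [t₀,b)_𝕋 where b ∈ (t₀,+∞)_𝕋 is a left-dense point of 𝕋; (2) if t₀ = max 𝕋 then I_𝕋 = (a,t₀]_𝕋 where a ∈ (−∞,t₀)_𝕋 is a right-dense point of 𝕋; (3) if t₀ ≠ inf 𝕋 and t₀ ≠ sup 𝕋 then I_𝕋 = (a,+∞)_𝕋 or I_𝕋 = (−∞,b)_𝕋 or I_𝕋 = (a,b)_𝕋, where a ∈ (−∞,t₀)_𝕋 is a right-dense point of 𝕋 and b ∈ (t₀,+∞)_𝕋 is a left-dense point of 𝕋. -/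

import Mathlib

/-!
Let `(q, I)` be the maximal solution and suppose that some point of the time scale to the right of
the initial time is missing from `I`; let `b` be the infimum of these missing points.

The key point is that a maximal solution has no last point other than the maximum of the time scale
(`LocSol`, local existence, and the gluing lemmas `glue_forward`, `glue_backward`).  From a
right-scattered point the solution is continued across the gap by the map `x ↦ x + μ(t) f(x, t)`,
which preserves `Ω` by forward stability; to the left across a gap one solves
`x + μ(t) f(x, t) = y`, which is possible since the map is onto.  At a dense point the solution is
continued by Picard iteration: composing with the floor map `tsFloor`, which sends a real number to
the largest point of the time scale below it, turns the Δ-integral into a Lebesgue integral, so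
that the problem becomes a Carathéodory equation with deviated argument (`picard_delay`,
`caratheodory_comp`), and the Δ-derivative is recovered almost everywhere from Lebesgue
differentiation.  The lemma `ae_delta_iff` splits "Δ-a.e." into a Lebesgue-a.e. statement on the
time scale and a pointwise statement at the right-scattered points.

Hence `b` does not belong to `I`; if `b` were left-scattered, its predecessor would be a last point
of `I`, which is excluded.  So `b` is left-dense.  The left endpoint is treated symmetrically.
-/

open MeasureTheory Set Filter Classical

noncomputable section
open scoped Classical

/-- The forward jump operator `σ` of a time scale `T`. -/
def tsSigma (T : Set ℝ) (t : ℝ) : ℝ :=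
  if ({s | s ∈ T ∧ t < s}).Nonempty then sInf {s | s ∈ T ∧ t < s} else t

/-- The backward jump operator `ρ` of a time scale `T`. -/
def tsRho (T : Set ℝ) (t : ℝ) : ℝ :=
  if ({s | s ∈ T ∧ s < t}).Nonempty then sSup {s | s ∈ T ∧ s < t} else t

/-- The graininess function `μ(t) = σ(t) - t`. -/
def tsGrain (T : Set ℝ) (t : ℝ) : ℝ := tsSigma T t - t

/-- `t` is a right-scattered point of `T`. -/
def RightScattered (T : Set ℝ) (t : ℝ) : Prop := t < tsSigma T t

/-- `t` is a right-dense point of `T`. -/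
def RightDense (T : Set ℝ) (t : ℝ) : Prop := tsSigma T t = t

/-- `t` is a left-scattered point of `T`. -/
def LeftScattered (T : Set ℝ) (t : ℝ) : Prop := tsRho T t < t

/-- `t` is a left-dense point of `T`. -/
def LeftDense (T : Set ℝ) (t : ℝ) : Prop := tsRho T t = t

/-- `𝕋 \ {sup 𝕋}`: the time scale minus its maximum (if the maximum exists). -/
def tsUpDomain (T : Set ℝ) : Set ℝ := {t | t ∈ T ∧ ¬ IsGreatest T t}

/-- The Lebesgue Δ-measure on the time scale `T`: Lebesgue measure restricted to `T`
plus `Σ_{r ∈ ℛ} μ(r)·δ_r` over right-scattered points `r`. -/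
def deltaMeasure (T : Set ℝ) : Measure ℝ :=
  volume.restrict T +
    Measure.sum (fun r : {t : ℝ // t ∈ T ∧ RightScattered T t} =>
      ENNReal.ofReal (tsGrain T r.1) • Measure.dirac r.1)

/-- Δ-differentiability of `q` at `t`, with Δ-derivative `q'`. -/
def HasDeltaDerivAt {n : ℕ} (T : Set ℝ) (q : ℝ → EuclideanSpace ℝ (Fin n))
    (q' : EuclideanSpace ℝ (Fin n)) (t : ℝ) : Prop :=
  ∀ ε > (0:ℝ), ∃ U ∈ nhds t, ∀ s ∈ U ∩ T,
    ‖q (tsSigma T t) - q s - (tsSigma T t - s) • q'‖ ≤ ε * |tsSigma T t - s|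

/-- Absolute continuity of `q` on `[a,b]_𝕋`. -/
def DeltaAC {n : ℕ} (T : Set ℝ) (a b : ℝ) (q : ℝ → EuclideanSpace ℝ (Fin n)) : Prop :=
  ∀ ε > (0:ℝ), ∃ δ > (0:ℝ), ∀ (m : ℕ) (u v : ℕ → ℝ),
    (∀ k < m, u k ∈ Icc a b ∩ T) → (∀ k < m, v k ∈ Icc a b ∩ T) →
    (∀ k < m, u k ≤ v k) →
    (∀ i < m, ∀ j < m, i ≠ j → Disjoint (Icc (u i) (v i)) (Icc (u j) (v j))) →
    (∑ k ∈ Finset.range m, (v k - u k)) < δ →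
    (∑ k ∈ Finset.range m, ‖q (v k) - q (u k)‖) < ε

/-- `f` is a Δ-Carathéodory function on `Ω × 𝕋\{sup 𝕋}`. -/
def DeltaCaratheodory {n : ℕ} (T : Set ℝ) (Ω : Set (EuclideanSpace ℝ (Fin n)))
    (f : EuclideanSpace ℝ (Fin n) → ℝ → EuclideanSpace ℝ (Fin n)) : Prop :=
  (∀ x ∈ Ω, AEMeasurable (fun t => f x t) ((deltaMeasure T).restrict (tsUpDomain T))) ∧
    ∀ᵐ t ∂((deltaMeasure T).restrict (tsUpDomain T)), ContinuousOn (fun x => f x t) Ω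

/-- Hypothesis (H∞): `f` is locally bounded. -/
def HInfty {n : ℕ} (T : Set ℝ) (Ω : Set (EuclideanSpace ℝ (Fin n)))
    (f : EuclideanSpace ℝ (Fin n) → ℝ → EuclideanSpace ℝ (Fin n)) : Prop :=
  ∀ K : Set (EuclideanSpace ℝ (Fin n)), K ⊆ Ω → IsCompact K →
    ∀ a ∈ T, ∀ b ∈ T, a < b →
      ∃ M : ℝ, 0 ≤ M ∧
        ∀ᵐ t ∂((deltaMeasure T).restrict (Ico a b ∩ T)), ∀ x ∈ K, ‖f x t‖ ≤ M

/-- Hypothesis (H^rd_loc-Lip): local Lipschitz continuity at right-dense points. -/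
def HrdLocLip {n : ℕ} (T : Set ℝ) (Ω : Set (EuclideanSpace ℝ (Fin n)))
    (f : EuclideanSpace ℝ (Fin n) → ℝ → EuclideanSpace ℝ (Fin n)) : Prop :=
  ∀ xb ∈ Ω, ∀ tb ∈ T, ¬ IsGreatest T tb → RightDense T tb →
    ∃ R > (0:ℝ), ∃ δ > (0:ℝ), ∃ L : ℝ, 0 ≤ L ∧
      Metric.closedBall xb R ⊆ Ω ∧ tb + δ ∈ T ∧
      ∀ᵐ t ∂((deltaMeasure T).restrict (Ico tb (tb + δ) ∩ T)),
        ∀ x₁ ∈ Metric.closedBall xb R, ∀ x₂ ∈ Metric.closedBall xb R,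
          ‖f x₁ t - f x₂ t‖ ≤ L * ‖x₁ - x₂‖

/-- Hypothesis (H^ld_loc-Lip): local Lipschitz continuity at left-dense points. -/
def HldLocLip {n : ℕ} (T : Set ℝ) (Ω : Set (EuclideanSpace ℝ (Fin n)))
    (f : EuclideanSpace ℝ (Fin n) → ℝ → EuclideanSpace ℝ (Fin n)) : Prop :=
  ∀ xb ∈ Ω, ∀ tb ∈ T, ¬ IsLeast T tb → LeftDense T tb →
    ∃ R > (0:ℝ), ∃ δ > (0:ℝ), ∃ L : ℝ, 0 ≤ L ∧
      Metric.closedBall xb R ⊆ Ω ∧ tb - δ ∈ T ∧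
      ∀ᵐ t ∂((deltaMeasure T).restrict (Ico (tb - δ) tb ∩ T)),
        ∀ x₁ ∈ Metric.closedBall xb R, ∀ x₂ ∈ Metric.closedBall xb R,
          ‖f x₁ t - f x₂ t‖ ≤ L * ‖x₁ - x₂‖

/-- Hypothesis (H^forw_stab): `G⁺(t) : x ↦ x + μ(t) f(x,t)` maps `Ω` into `Ω`. -/
def HforwStab {n : ℕ} (T : Set ℝ) (Ω : Set (EuclideanSpace ℝ (Fin n)))
    (f : EuclideanSpace ℝ (Fin n) → ℝ → EuclideanSpace ℝ (Fin n)) : Prop :=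
  ∀ t ∈ T, RightScattered T t → ∀ x ∈ Ω, x + tsGrain T t • f x t ∈ Ω

/-- Hypothesis (H^back_regr): `G⁺(t)` is a bijection from `Ω` onto `ℝⁿ`. -/
def HbackRegr {n : ℕ} (T : Set ℝ) (Ω : Set (EuclideanSpace ℝ (Fin n)))
    (f : EuclideanSpace ℝ (Fin n) → ℝ → EuclideanSpace ℝ (Fin n)) : Prop :=
  ∀ t ∈ T, RightScattered T t → Set.BijOn (fun x => x + tsGrain T t • f x t) Ω univ

/-- Hypothesis (H^back_stab): `G⁻(t) : x ↦ x - μ(t) f(x,t)` maps `Ω` into `Ω`. -/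
def HbackStab {n : ℕ} (T : Set ℝ) (Ω : Set (EuclideanSpace ℝ (Fin n)))
    (f : EuclideanSpace ℝ (Fin n) → ℝ → EuclideanSpace ℝ (Fin n)) : Prop :=
  ∀ t ∈ T, RightScattered T t → ∀ x ∈ Ω, x - tsGrain T t • f x t ∈ Ω

/-- Hypothesis (H^forw_regr): `G⁻(t)` is a bijection from `Ω` onto `ℝⁿ`. -/
def HforwRegr {n : ℕ} (T : Set ℝ) (Ω : Set (EuclideanSpace ℝ (Fin n)))
    (f : EuclideanSpace ℝ (Fin n) → ℝ → EuclideanSpace ℝ (Fin n)) : Prop :=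
  ∀ t ∈ T, RightScattered T t → Set.BijOn (fun x => x - tsGrain T t • f x t) Ω univ

/-- Hypothesis (H^glob_Lip): global Lipschitz continuity. -/
def HglobLip {n : ℕ} (T : Set ℝ) (Ω : Set (EuclideanSpace ℝ (Fin n)))
    (f : EuclideanSpace ℝ (Fin n) → ℝ → EuclideanSpace ℝ (Fin n)) : Prop :=
  ∃ L : ℝ, 0 ≤ L ∧
    ∀ᵐ t ∂((deltaMeasure T).restrict (tsUpDomain T)),
      ∀ x₁ ∈ Ω, ∀ x₂ ∈ Ω, ‖f x₁ t - f x₂ t‖ ≤ L * ‖x₁ - x₂‖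

/-- The relation `a ⊴ t₀ ⊴ b`. -/
def Trile (T : Set ℝ) (t₀ a b : ℝ) : Prop :=
  (IsLeast T t₀ ∧ a = t₀ ∧ t₀ < b) ∨
  (IsGreatest T t₀ ∧ a < t₀ ∧ t₀ = b) ∨
  (¬ IsLeast T t₀ ∧ ¬ IsGreatest T t₀ ∧ a < t₀ ∧ t₀ < b)

/-- `(q, [a,b]_𝕋)` is a solution of the non shifted Δ-Cauchy problem (Δ-CP). -/
def IsSolIcc {n : ℕ} (T : Set ℝ) (Ω : Set (EuclideanSpace ℝ (Fin n)))
    (f : EuclideanSpace ℝ (Fin n) → ℝ → EuclideanSpace ℝ (Fin n))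
    (t₀ : ℝ) (q₀ : EuclideanSpace ℝ (Fin n))
    (q : ℝ → EuclideanSpace ℝ (Fin n)) (a b : ℝ) : Prop :=
  (∀ t ∈ Icc a b ∩ T, q t ∈ Ω) ∧ DeltaAC T a b q ∧ q t₀ = q₀ ∧
    ∀ᵐ t ∂((deltaMeasure T).restrict (Ico a b ∩ T)),
      HasDeltaDerivAt T q (f (q t) t) t

/-- `(q, [a,b]_𝕋)` is a solution of the shifted Δ-Cauchy problem (Δ-CP^σ). -/
def IsSolIccS {n : ℕ} (T : Set ℝ) (Ω : Set (EuclideanSpace ℝ (Fin n)))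
    (f : EuclideanSpace ℝ (Fin n) → ℝ → EuclideanSpace ℝ (Fin n))
    (t₀ : ℝ) (q₀ : EuclideanSpace ℝ (Fin n))
    (q : ℝ → EuclideanSpace ℝ (Fin n)) (a b : ℝ) : Prop :=
  (∀ t ∈ Icc a b ∩ T, q t ∈ Ω) ∧ DeltaAC T a b q ∧ q t₀ = q₀ ∧
    ∀ᵐ t ∂((deltaMeasure T).restrict (Ico a b ∩ T)),
      HasDeltaDerivAt T q (f (q (tsSigma T t)) t) t

/-- `I_𝕋 ∈ 𝕀`: `I` is a real interval containing points `a, b` of `T` with `a ⊴ t₀ ⊴ b`. -/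
def MemI (T : Set ℝ) (t₀ : ℝ) (I : Set ℝ) : Prop :=
  I.OrdConnected ∧ ∃ a ∈ I ∩ T, ∃ b ∈ I ∩ T, Trile T t₀ a b

/-- `(q, I_𝕋)` is a solution of (Δ-CP). -/
def IsSol {n : ℕ} (T : Set ℝ) (Ω : Set (EuclideanSpace ℝ (Fin n)))
    (f : EuclideanSpace ℝ (Fin n) → ℝ → EuclideanSpace ℝ (Fin n))
    (t₀ : ℝ) (q₀ : EuclideanSpace ℝ (Fin n))
    (q : ℝ → EuclideanSpace ℝ (Fin n)) (I : Set ℝ) : Prop :=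
  MemI T t₀ I ∧ (∀ t ∈ I ∩ T, q t ∈ Ω) ∧
    ∀ a ∈ I ∩ T, ∀ b ∈ I ∩ T, Trile T t₀ a b → IsSolIcc T Ω f t₀ q₀ q a b

/-- `(q, I_𝕋)` is a solution of (Δ-CP^σ). -/
def IsSolS {n : ℕ} (T : Set ℝ) (Ω : Set (EuclideanSpace ℝ (Fin n)))
    (f : EuclideanSpace ℝ (Fin n) → ℝ → EuclideanSpace ℝ (Fin n))
    (t₀ : ℝ) (q₀ : EuclideanSpace ℝ (Fin n))
    (q : ℝ → EuclideanSpace ℝ (Fin n)) (I : Set ℝ) : Prop :=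
  MemI T t₀ I ∧ (∀ t ∈ I ∩ T, q t ∈ Ω) ∧
    ∀ a ∈ I ∩ T, ∀ b ∈ I ∩ T, Trile T t₀ a b → IsSolIccS T Ω f t₀ q₀ q a b

/-- `(q₁, I₁_𝕋)` is an extension of `(q, I_𝕋)`. -/
def SolExtends {n : ℕ} (T : Set ℝ) (q₁ : ℝ → EuclideanSpace ℝ (Fin n)) (I₁ : Set ℝ)
    (q : ℝ → EuclideanSpace ℝ (Fin n)) (I : Set ℝ) : Prop :=
  I ∩ T ⊆ I₁ ∩ T ∧ EqOn q₁ q (I ∩ T)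

/-- `(q, I_𝕋)` is a maximal solution of (Δ-CP). -/
def IsMaxSol {n : ℕ} (T : Set ℝ) (Ω : Set (EuclideanSpace ℝ (Fin n)))
    (f : EuclideanSpace ℝ (Fin n) → ℝ → EuclideanSpace ℝ (Fin n))
    (t₀ : ℝ) (q₀ : EuclideanSpace ℝ (Fin n))
    (q : ℝ → EuclideanSpace ℝ (Fin n)) (I : Set ℝ) : Prop :=
  IsSol T Ω f t₀ q₀ q I ∧
    ∀ q₁ I₁, IsSol T Ω f t₀ q₀ q₁ I₁ → SolExtends T q₁ I₁ q I → I₁ ∩ T = I ∩ T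

/-- `(q, I_𝕋)` is a maximal solution of (Δ-CP^σ). -/
def IsMaxSolS {n : ℕ} (T : Set ℝ) (Ω : Set (EuclideanSpace ℝ (Fin n)))
    (f : EuclideanSpace ℝ (Fin n) → ℝ → EuclideanSpace ℝ (Fin n))
    (t₀ : ℝ) (q₀ : EuclideanSpace ℝ (Fin n))
    (q : ℝ → EuclideanSpace ℝ (Fin n)) (I : Set ℝ) : Prop :=
  IsSolS T Ω f t₀ q₀ q I ∧
    ∀ q₁ I₁, IsSolS T Ω f t₀ q₀ q₁ I₁ → SolExtends T q₁ I₁ q I → I₁ ∩ T = I ∩ T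

/-! ### Order structure of a time scale and null sets of the Δ-measure -/

lemma sigma_mem_of_lt {T : Set ℝ} (hT : IsClosed T) {t : ℝ} (h : ∃ s ∈ T, t < s) :
    tsSigma T t ∈ T ∧ t ≤ tsSigma T t ∧ ∀ s ∈ T, t < s → tsSigma T t ≤ s := by
  obtain ⟨s, hs, hts⟩ := h
  have hne : ({s | s ∈ T ∧ t < s}).Nonempty := ⟨s, hs, hts⟩
  have hbd : BddBelow {s | s ∈ T ∧ t < s} := ⟨t, fun x hx => hx.2.le⟩
  unfold tsSigma
  rw [if_pos hne]
  refine ⟨?_, le_csInf hne fun x hx => hx.2.le, fun s hs hts => csInf_le hbd ⟨hs, hts⟩⟩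
  have h1 := csInf_mem_closure hne hbd
  have h2 : closure {s | s ∈ T ∧ t < s} ⊆ T := closure_minimal (fun x hx => hx.1) hT
  exact h2 h1

lemma rho_mem_of_lt {T : Set ℝ} (hT : IsClosed T) {t : ℝ} (h : ∃ s ∈ T, s < t) :
    tsRho T t ∈ T ∧ tsRho T t ≤ t ∧ ∀ s ∈ T, s < t → s ≤ tsRho T t := by
  obtain ⟨s, hs, hts⟩ := h
  have hne : ({s | s ∈ T ∧ s < t}).Nonempty := ⟨s, hs, hts⟩
  have hbd : BddAbove {s | s ∈ T ∧ s < t} := ⟨t, fun x hx => hx.2.le⟩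
  unfold tsRho
  rw [if_pos hne]
  refine ⟨?_, csSup_le hne fun x hx => hx.2.le, fun s hs hts => le_csSup hbd ⟨hs, hts⟩⟩
  have h1 := csSup_mem_closure hne hbd
  have h2 : closure {s | s ∈ T ∧ s < t} ⊆ T := closure_minimal (fun x hx => hx.1) hT
  exact h2 h1

lemma RightScattered.exists_gt {T : Set ℝ} {t : ℝ} (h : RightScattered T t) :
    ∃ s ∈ T, t < s := by
  by_contra hc
  unfold RightScattered tsSigma at h
  rw [if_neg] at h
  · exact lt_irrefl _ h
  · rintro ⟨s, hs⟩
    exact hc ⟨s, hs.1, hs.2⟩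

lemma LeftScattered.exists_lt {T : Set ℝ} {t : ℝ} (h : LeftScattered T t) :
    ∃ s ∈ T, s < t := by
  by_contra hc
  unfold LeftScattered tsRho at h
  rw [if_neg] at h
  · exact lt_irrefl _ h
  · rintro ⟨s, hs⟩
    exact hc ⟨s, hs.1, hs.2⟩

lemma RightScattered.sigma_mem {T : Set ℝ} (hT : IsClosed T) {t : ℝ} (h : RightScattered T t) :
    tsSigma T t ∈ T := (sigma_mem_of_lt hT h.exists_gt).1

lemma RightScattered.sigma_le {T : Set ℝ} (hT : IsClosed T) {t s : ℝ} (h : RightScattered T t)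
    (hs : s ∈ T) (hts : t < s) : tsSigma T t ≤ s := (sigma_mem_of_lt hT h.exists_gt).2.2 s hs hts

lemma le_sigma {T : Set ℝ} (hT : IsClosed T) (t : ℝ) : t ≤ tsSigma T t := by
  by_cases h : ∃ s ∈ T, t < s
  · exact (sigma_mem_of_lt hT h).2.1
  · unfold tsSigma
    rw [if_neg]
    rintro ⟨s, hs⟩
    exact h ⟨s, hs.1, hs.2⟩

lemma not_rightScattered {T : Set ℝ} (hT : IsClosed T) {t : ℝ} (h : ¬ RightScattered T t) :
    RightDense T t := le_antisymm (not_lt.1 h) (le_sigma hT t)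

lemma sigma_le_of_lt {T : Set ℝ} (hT : IsClosed T) {t s : ℝ} (hs : s ∈ T) (h : t < s) :
    tsSigma T t ≤ s := (sigma_mem_of_lt hT ⟨s, hs, h⟩).2.2 s hs h

/-- Right-scattered points are countable: the gaps `(t, σ t)` are disjoint open intervals. -/
lemma countable_rightScattered {T : Set ℝ} (hT : IsClosed T) :
    {t : ℝ | t ∈ T ∧ RightScattered T t}.Countable := by
  apply Set.PairwiseDisjoint.countable_of_Ioo (y := tsSigma T) _ (fun x hx => hx.2)
  intro a ha b hb hab
  wlog H : a < b generalizing a b with h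
  · exact (h hb ha hab.symm (lt_of_le_of_ne (not_lt.1 H) hab.symm)).symm
  have : tsSigma T a ≤ b := ha.2.sigma_le hT hb.1 H
  simp only [Function.onFun]
  rw [disjoint_iff_forall_ne]
  exact fun u hu v hv => ((hu.2.trans_le this).trans hv.1).ne

/-- A property holds Δ-a.e. on `A` iff it holds Lebesgue-a.e. on `T ∩ A` and at every
right-scattered point of `A`, because each such point is an atom. -/
lemma ae_delta_iff {T : Set ℝ} (hT : IsClosed T) {A : Set ℝ} (hA : MeasurableSet A)
    {P : ℝ → Prop} :
    (∀ᵐ t ∂((deltaMeasure T).restrict A), P t) ↔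
      (∀ᵐ t ∂(volume : Measure ℝ), t ∈ T → t ∈ A → P t) ∧
      ∀ r ∈ T, RightScattered T r → r ∈ A → P r := by
  have hc : Countable {t : ℝ // t ∈ T ∧ RightScattered T t} :=
    (countable_rightScattered hT).to_subtype
  rw [ae_restrict_iff' hA]
  unfold deltaMeasure
  rw [ae_add_measure_iff, ae_restrict_iff' hT.measurableSet, Measure.ae_sum_iff]
  refine and_congr Iff.rfl ?_
  constructor
  · intro h r hr hs hrA
    have h1 := h ⟨r, hr, hs⟩
    rw [Measure.ae_ennreal_smul_measure_iff, ae_dirac_eq] at h1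
    · exact h1 hrA
    · simpa [tsGrain, RightScattered] using hs
  · rintro h ⟨r, hr, hs⟩
    rw [Measure.ae_ennreal_smul_measure_iff, ae_dirac_eq]
    · exact fun hrA => h r hr hs hrA
    · simpa [tsGrain, RightScattered] using hs

/-- The floor of `u` in the time scale: the largest point of `T` that is at most `max c u`.
Composing with it turns a Δ-integral over `[c, d)_T` into a Lebesgue integral over `[c, d]`. The
cut-off at `c` keeps the map monotone on all of `ℝ`, also below `inf T`, where a bare supremum
would take a junk value. -/
def tsFloor (T : Set ℝ) (c u : ℝ) : ℝ := sSup (T ∩ Iic (max c u))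

lemma le_floor {T : Set ℝ} {c u s : ℝ} (hs : s ∈ T) (hsu : s ≤ u) : s ≤ tsFloor T c u :=
  le_csSup ⟨max c u, fun _ hx => hx.2⟩ ⟨hs, hsu.trans (le_max_right _ _)⟩

lemma floor_measurable {T : Set ℝ} {c : ℝ} (hc : c ∈ T) : Measurable (tsFloor T c) := by
  apply Monotone.measurable
  intro u v huv
  refine csSup_le_csSup ⟨max c v, fun _ hx => hx.2⟩ ⟨c, hc, mem_Iic.2 (le_max_left _ _)⟩ ?_
  exact inter_subset_inter_right _ (Iic_subset_Iic.2 (max_le_max le_rfl huv))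

lemma floor_mem {T : Set ℝ} (hT : IsClosed T) {c : ℝ} (hc : c ∈ T)
    (u : ℝ) : tsFloor T c u ∈ T ∩ Iic (max c u) := by
  have hne : (T ∩ Iic (max c u)).Nonempty := ⟨c, hc, mem_Iic.2 (le_max_left _ _)⟩
  exact (hT.inter isClosed_Iic).csSup_mem hne ⟨max c u, fun x hx => hx.2⟩

lemma floor_le {T : Set ℝ} (hT : IsClosed T) {c : ℝ} (hc : c ∈ T)
    {u : ℝ} (hu : c ≤ u) : tsFloor T c u ≤ u := by
  have := (floor_mem hT hc u).2
  rwa [mem_Iic, max_eq_right hu] at this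

lemma floor_eq {T : Set ℝ} (hT : IsClosed T) {c : ℝ} (hc : c ∈ T)
    {u : ℝ} (hu : u ∈ T) (hcu : c ≤ u) : tsFloor T c u = u :=
  le_antisymm (floor_le hT hc hcu) (le_floor hu le_rfl)

lemma floor_rightScattered {T : Set ℝ} (hT : IsClosed T) {c : ℝ} (hc : c ∈ T)
    {u : ℝ} (hu : u ∉ T) (hcu : c ≤ u) (hg : ∃ s ∈ T, u < s) :
    RightScattered T (tsFloor T c u) := by
  have hlt : tsFloor T c u < u := lt_of_le_of_ne (floor_le hT hc hcu)
    (fun h => hu (h ▸ (floor_mem hT hc u).1))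
  obtain ⟨s, hs, hus⟩ := hg
  obtain ⟨h1, h2, -⟩ := sigma_mem_of_lt hT ⟨s, hs, hlt.trans hus⟩
  by_contra hcon
  -- otherwise points of `T` accumulate at the floor from the right, below `u`
  have hdense := not_rightScattered hT hcon
  unfold RightDense tsSigma at hdense
  have hne : ({s | s ∈ T ∧ tsFloor T c u < s}).Nonempty := ⟨s, hs, hlt.trans hus⟩
  rw [if_pos hne] at hdense
  obtain ⟨x, hx, hxu⟩ := exists_lt_of_csInf_lt hne (hdense.trans_lt hlt)
  exact absurd (le_floor hx.1 hxu.le) (not_le.2 hx.2)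

lemma floor_gap {T : Set ℝ} (hT : IsClosed T) {c : ℝ} (hc : c ∈ T)
    {r u : ℝ} (hr : r ∈ T) (hcr : c ≤ r) (hs : RightScattered T r)
    (h1 : r ≤ u) (h2 : u < tsSigma T r) : tsFloor T c u = r := by
  refine le_antisymm ?_ (le_floor hr h1)
  by_contra hcon
  have := hs.sigma_le hT (floor_mem hT hc u).1 (not_le.1 hcon)
  have := floor_le hT hc (hcr.trans h1)
  linarith

/-- The floor map pulls Δ-null sets back to Lebesgue-null sets. -/
lemma ae_floor {T : Set ℝ} (hT : IsClosed T) {c : ℝ} (hc : c ∈ T)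
    {d : ℝ} (hd : d ∈ T) {P : ℝ → Prop}
    (h : ∀ᵐ t ∂((deltaMeasure T).restrict (Ico c d ∩ T)), P t) :
    ∀ᵐ u ∂(volume.restrict (Ioc c d)), P (tsFloor T c u) := by
  rw [ae_delta_iff hT (measurableSet_Ico.inter hT.measurableSet)] at h
  rw [ae_restrict_iff' measurableSet_Ioc]
  have hne : ∀ᵐ u ∂(volume : Measure ℝ), u ≠ d := by simp [ae_iff, measure_singleton]
  filter_upwards [h.1, hne] with u hu hud hI
  have hlt : u < d := lt_of_le_of_ne hI.2 hud
  by_cases huT : u ∈ T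
  · rw [floor_eq hT hc huT hI.1.le]
    exact hu huT ⟨⟨hI.1.le, hlt⟩, huT⟩
  · refine h.2 _ (floor_mem hT hc u).1
      (floor_rightScattered hT hc huT hI.1.le ⟨d, hd, hlt⟩)
      ⟨⟨le_floor hc hI.1.le, (floor_le hT hc hI.1.le).trans_lt hlt⟩, (floor_mem hT hc u).1⟩

lemma aemeasurable_comp_floor {T : Set ℝ} (hT : IsClosed T) {c : ℝ} (hc : c ∈ T)
    {d : ℝ} (hd : d ∈ T) {β : Type*} [MeasurableSpace β] {g : ℝ → β}
    (h : AEMeasurable g ((deltaMeasure T).restrict (Ico c d ∩ T))) :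
    AEMeasurable (fun u => g (tsFloor T c u)) (volume.restrict (Ioc c d)) :=
  ⟨fun u => h.mk g (tsFloor T c u), h.measurable_mk.comp (floor_measurable hc),
    ae_floor hT hc hd h.ae_eq_mk⟩

/-! ### Picard iteration for an equation with deviated argument -/

/-- Picard existence for `p t = x + ∫_{ts}^t F u (p (γ u)) du`, where the deviation `γ` is
arbitrary: only boundedness and the Lipschitz property of `F` on the ball enter, so the usual
contraction argument on Lipschitz curves applies, with measurability of the integrand as a
hypothesis. -/
lemma picard_delay {E : Type*} [NormedAddCommGroup E] [NormedSpace ℝ E] [CompleteSpace E]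
    {c d : ℝ} (ts : Icc c d) (x : E) (R M : NNReal) (L : ℝ) (hL : 0 ≤ L)
    (γ : ℝ → ℝ) (F : ℝ → E → E)
    (hbd : ∀ᵐ u ∂(volume.restrict (Ioc c d)), ∀ y ∈ Metric.closedBall x R, ‖F u y‖ ≤ M)
    (hlip : ∀ᵐ u ∂(volume.restrict (Ioc c d)), ∀ y ∈ Metric.closedBall x R,
      ∀ z ∈ Metric.closedBall x R, ‖F u y - F u z‖ ≤ L * ‖y - z‖)
    (hmeas : ∀ p : ℝ → E, Continuous p → (∀ t, p t ∈ Metric.closedBall x R) →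
      AEStronglyMeasurable (fun u => F u (p (γ u))) (volume.restrict (Ioc c d)))
    (hMR : M * (d - c) ≤ R) (hLd : L * (d - c) ≤ 1 / 2) :
    ∃ p : ℝ → E, LipschitzWith M p ∧ (∀ t, p t ∈ Metric.closedBall x R) ∧
      IntervalIntegrable (fun u => F u (p (γ u))) volume c d ∧
      ∀ t ∈ Icc c d, p t = x + ∫ u in ts..t, F u (p (γ u)) := by
  have hcd : c ≤ d := ts.2.1.trans ts.2.2
  have hball : ∀ α : ODE.FunSpace ts x 0 M, ∀ t, α.compProj t ∈ Metric.closedBall x R := by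
    intro α t
    refine α.compProj_mem_closedBall (a := R) ?_
    have : max (d - ts) (ts - c) ≤ d - c :=
      max_le (by linarith [ts.2.1]) (by linarith [ts.2.2])
    have := mul_le_mul_of_nonneg_left this M.2
    simp only [NNReal.coe_zero, sub_zero]
    exact this.trans hMR
  have hint : ∀ α : ODE.FunSpace ts x 0 M,
      IntegrableOn (fun u => F u (α.compProj (γ u))) (Ioc c d) := by
    intro α
    refine Integrable.of_bound (C := M) (hmeas _ α.continuous_compProj (hball α)) ?_
    filter_upwards [hbd] with u hu
    exact hu _ (hball α _)
  have hii : ∀ α : ODE.FunSpace ts x 0 M, ∀ s ∈ Icc c d, ∀ t ∈ Icc c d,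
      IntervalIntegrable (fun u => F u (α.compProj (γ u))) volume s t := by
    intro α s hs t ht
    rw [intervalIntegrable_iff]
    exact (hint α).mono_set (Ioc_subset_Ioc (le_min hs.1 ht.1) (max_le hs.2 ht.2))
  have hrest : ∀ s ∈ Icc c d, ∀ t ∈ Icc c d, ∀ {P : ℝ → Prop},
      (∀ᵐ u ∂(volume.restrict (Ioc c d)), P u) → ∀ᵐ u, u ∈ Set.uIoc s t → P u := by
    intro s hs t ht P h
    rw [ae_restrict_iff' measurableSet_Ioc] at h
    filter_upwards [h] with u hu hI
    exact hu (Ioc_subset_Ioc (le_min hs.1 ht.1) (max_le hs.2 ht.2) hI)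
  let Φ : ODE.FunSpace ts x 0 M → ODE.FunSpace ts x 0 M := fun α =>
    { toFun := fun t => x + ∫ u in ts..t, F u (α.compProj (γ u))
      lipschitzWith := by
        refine LipschitzWith.of_dist_le_mul fun t₁ t₂ => ?_
        rw [dist_eq_norm, add_sub_add_left_eq_sub,
          intervalIntegral.integral_interval_sub_left (hii α _ ts.2 _ t₁.2)
            (hii α _ ts.2 _ t₂.2), Subtype.dist_eq, Real.dist_eq]
        refine intervalIntegral.norm_integral_le_of_norm_le_const_ae ?_
        filter_upwards [hrest _ t₂.2 _ t₁.2 hbd] with u hu hI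
        exact hu hI _ (hball α _)
      mem_closedBall₀ := by simp }
  have hΦ : ContractingWith (1 / 2) Φ := by
    refine ⟨by norm_num, LipschitzWith.of_dist_le_mul fun α β => ?_⟩
    have h0 : (0 : ℝ) ≤ ((1 / 2 : NNReal) : ℝ) * dist α β := by positivity
    change dist (Φ α).toContinuousMap (Φ β).toContinuousMap ≤ _
    rw [ContinuousMap.dist_le h0]
    intro t
    change dist (x + ∫ u in ts..t, F u (α.compProj (γ u)))
      (x + ∫ u in ts..t, F u (β.compProj (γ u))) ≤ _
    rw [dist_eq_norm, add_sub_add_left_eq_sub,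
      ← intervalIntegral.integral_sub (hii α _ ts.2 _ t.2) (hii β _ ts.2 _ t.2)]
    have hb : ‖∫ u in ts..t, (F u (α.compProj (γ u)) - F u (β.compProj (γ u)))‖
        ≤ L * dist α β * |(t : ℝ) - ts| := by
      refine intervalIntegral.norm_integral_le_of_norm_le_const_ae ?_
      filter_upwards [hrest _ ts.2 _ t.2 hlip] with u hu hI
      refine (hu hI _ (hball α _) _ (hball β _)).trans ?_
      rw [← dist_eq_norm]
      refine mul_le_mul_of_nonneg_left ?_ hL
      exact ContinuousMap.dist_apply_le_dist (f := α.toContinuousMap) (g := β.toContinuousMap) _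
    refine hb.trans ?_
    have h1 : |(t : ℝ) - ts| ≤ d - c := by
      rw [abs_le]
      constructor <;> linarith [t.2.1, t.2.2, ts.2.1, ts.2.2]
    have h2 : (0 : ℝ) ≤ dist α β := dist_nonneg
    calc L * dist α β * |(t : ℝ) - ts| ≤ L * dist α β * (d - c) := by gcongr
      _ = L * (d - c) * dist α β := by ring
      _ ≤ 1 / 2 * dist α β := by gcongr
      _ = _ := by norm_num
  have : Nonempty (ODE.FunSpace ts x 0 M) := ⟨default⟩
  obtain ⟨α, hα⟩ : ∃ α, Φ α = α := ⟨_, hΦ.fixedPoint_isFixedPt⟩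
  refine ⟨α.compProj, ?_, hball α, hii α _ ⟨le_rfl, hcd⟩ _ ⟨hcd, le_rfl⟩, ?_⟩
  · have := α.lipschitzWith.comp (LipschitzWith.projIcc hcd)
    rw [mul_one] at this
    exact this
  · intro t ht
    rw [ODE.FunSpace.compProj_of_mem ht]
    conv_lhs => rw [← hα]

/-- Carathéodory measurability: substituting a continuous curve into `f`, through the floor map,
gives a measurable integrand. The curve is approximated by simple functions. -/
lemma caratheodory_comp {n : ℕ} {T : Set ℝ} (hT : IsClosed T) {c d : ℝ} (hc : c ∈ T) (hd : d ∈ T)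
    {f : EuclideanSpace ℝ (Fin n) → ℝ → EuclideanSpace ℝ (Fin n)}
    {x : EuclideanSpace ℝ (Fin n)} {R L : ℝ}
    (hm : ∀ y ∈ Metric.closedBall x R,
      AEMeasurable (fun t => f y t) ((deltaMeasure T).restrict (Ico c d ∩ T)))
    (hlip : ∀ᵐ u ∂(volume.restrict (Ioc c d)), ∀ y ∈ Metric.closedBall x R,
      ∀ z ∈ Metric.closedBall x R,
        ‖f y (tsFloor T c u) - f z (tsFloor T c u)‖ ≤ L * ‖y - z‖)
    (p : ℝ → EuclideanSpace ℝ (Fin n)) (hp : Continuous p)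
    (hpb : ∀ t, p t ∈ Metric.closedBall x R) :
    AEStronglyMeasurable (fun u => f (p (tsFloor T c u)) (tsFloor T c u))
      (volume.restrict (Ioc c d)) := by
  let w : ℝ → Metric.closedBall x R := fun u => ⟨p (tsFloor T c u), hpb _⟩
  have hw : Measurable w :=
    (hp.measurable.comp (floor_measurable hc)).subtype_mk
  have hsm : StronglyMeasurable w := hw.stronglyMeasurable
  refine AEMeasurable.aestronglyMeasurable ?_
  refine aemeasurable_of_tendsto_metrizable_ae atTop
    (f := fun k u => f (hsm.approx k u : EuclideanSpace ℝ (Fin n)) (tsFloor T c u)) ?_ ?_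
  · intro k
    have hcov : (⋃ y : (hsm.approx k).range, (hsm.approx k) ⁻¹' {(y : Metric.closedBall x R)})
        = univ := by
      ext u
      simp
    rw [← Measure.restrict_univ (μ := volume.restrict (Ioc c d)), ← hcov,
      aemeasurable_iUnion_iff]
    rintro ⟨y, hy⟩
    have h1 := (aemeasurable_comp_floor hT hc hd (hm y y.2)).mono_measure
      (Measure.restrict_le_self (μ := volume.restrict (Ioc c d))
        (s := (hsm.approx k) ⁻¹' {y}))
    refine h1.congr ?_
    filter_upwards [ae_restrict_mem ((hsm.approx k).measurableSet_fiber y)] with u hu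
    have : hsm.approx k u = y := hu
    simp only [this]
  · filter_upwards [hlip] with u hu
    have h1 := hsm.tendsto_approx u
    rw [tendsto_iff_norm_sub_tendsto_zero]
    have h2 : Tendsto (fun k => L * ‖((hsm.approx k u : Metric.closedBall x R) :
        EuclideanSpace ℝ (Fin n)) - w u‖) atTop (nhds 0) := by
      have h3 := (continuous_subtype_val.tendsto _).comp h1
      rw [tendsto_iff_norm_sub_tendsto_zero] at h3
      simpa using h3.const_mul L
    exact squeeze_zero (fun _ => norm_nonneg _)
      (fun k => hu _ (hsm.approx k u).2 _ (w u).2) h2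
/-! ### Δ-derivatives and absolute continuity -/

section derivative
variable {n : ℕ} {T : Set ℝ}

/-- The Δ-derivative is local, apart from the value at `σ t`. -/
lemma HasDeltaDerivAt.congr {q p : ℝ → EuclideanSpace ℝ (Fin n)} {v : EuclideanSpace ℝ (Fin n)}
    {t : ℝ} (h : HasDeltaDerivAt T q v t) (U : Set ℝ) (hU : U ∈ nhds t)
    (heq : ∀ s ∈ U ∩ T, p s = q s) (hs : p (tsSigma T t) = q (tsSigma T t)) :
    HasDeltaDerivAt T p v t := by
  intro ε hε
  obtain ⟨V, hV, h1⟩ := h ε hε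
  refine ⟨U ∩ V, inter_mem hU hV, fun s hsm => ?_⟩
  rw [hs, heq s ⟨hsm.1.1, hsm.2⟩]
  exact h1 s ⟨hsm.1.2, hsm.2⟩

/-- At a right-scattered point the Δ-derivative is the forward difference quotient. -/
lemma HasDeltaDerivAt.step {q : ℝ → EuclideanSpace ℝ (Fin n)} {v : EuclideanSpace ℝ (Fin n)}
    {t : ℝ} (h : HasDeltaDerivAt T q v t) (ht : t ∈ T) :
    q (tsSigma T t) = q t + tsGrain T t • v := by
  have h0 : ‖q (tsSigma T t) - q t - (tsSigma T t - t) • v‖ ≤ 0 := by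
    refine le_of_forall_pos_le_add fun ε hε => ?_
    have hpos : 0 < |tsSigma T t - t| + 1 := by positivity
    obtain ⟨U, hU, h1⟩ := h (ε / (|tsSigma T t - t| + 1)) (by positivity)
    refine (h1 t ⟨mem_of_mem_nhds hU, ht⟩).trans ?_
    rw [div_mul_eq_mul_div, div_le_iff₀ hpos]
    nlinarith [abs_nonneg (tsSigma T t - t)]
  have h2 := norm_le_zero_iff.1 h0
  rw [sub_sub, sub_eq_zero] at h2
  exact h2

lemma hasDeltaDerivAt_of_step (hT : IsClosed T) {q : ℝ → EuclideanSpace ℝ (Fin n)}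
    {v : EuclideanSpace ℝ (Fin n)} {t : ℝ} (hs : RightScattered T t)
    (h : q (tsSigma T t) = q t + tsGrain T t • v)
    (hc : ContinuousWithinAt q (T ∩ Iic t) t) : HasDeltaDerivAt T q v t := by
  intro ε hε
  have hμ : 0 < tsSigma T t - t := sub_pos.2 hs
  have hlim : ContinuousWithinAt (fun s => ‖q (tsSigma T t) - q s - (tsSigma T t - s) • v‖
      - ε * |tsSigma T t - s|) (T ∩ Iic t) t := by
    refine ContinuousWithinAt.sub ?_ ?_
    · exact ((continuousWithinAt_const.sub hc).sub
        (by fun_prop)).norm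
    · fun_prop
  have hneg : ‖q (tsSigma T t) - q t - (tsSigma T t - t) • v‖
      - ε * |tsSigma T t - t| < 0 := by
    rw [h, abs_of_pos hμ]
    simp only [tsGrain, add_sub_cancel_left, sub_self, norm_zero]
    nlinarith
  have hev := hlim.eventually (gt_mem_nhds hneg)
  rw [eventually_nhdsWithin_iff] at hev
  refine ⟨_, inter_mem hev (Iio_mem_nhds hs), fun s hsm => ?_⟩
  have hst : s ≤ t := by
    by_contra hcon
    have := hs.sigma_le hT hsm.2 (not_le.1 hcon)
    exact absurd hsm.1.2 (not_lt.2 this)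
  have := hsm.1.1 ⟨hsm.2, hst⟩
  linarith

lemma hasDeltaDerivAt_of_hasDerivAt {q : ℝ → EuclideanSpace ℝ (Fin n)}
    {v : EuclideanSpace ℝ (Fin n)} {t : ℝ} (hs : RightDense T t) (h : HasDerivAt q v t) :
    HasDeltaDerivAt T q v t := by
  intro ε hε
  have h1 := (hasDerivAt_iff_isLittleO.1 h).def hε
  refine ⟨_, h1, fun s hsm => ?_⟩
  have h2 : ‖q s - q t - (s - t) • v‖ ≤ ε * ‖s - t‖ := hsm.1
  rw [show tsSigma T t = t from hs]
  have h3 : q t - q s - (t - s) • v = -(q s - q t - (s - t) • v) := by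
    rw [sub_smul, sub_smul]; abel
  rw [h3, norm_neg, abs_sub_comm]
  exact h2

lemma DeltaAC.mono {a b a' b' : ℝ} {q : ℝ → EuclideanSpace ℝ (Fin n)} (h : DeltaAC T a b q)
    (ha : a ≤ a') (hb : b' ≤ b) : DeltaAC T a' b' q := by
  intro ε hε
  obtain ⟨δ, hδ, h1⟩ := h ε hε
  refine ⟨δ, hδ, fun m u v hu hv => h1 m u v (fun k hk => ?_) (fun k hk => ?_)⟩
  · exact ⟨Icc_subset_Icc ha hb (hu k hk).1, (hu k hk).2⟩
  · exact ⟨Icc_subset_Icc ha hb (hv k hk).1, (hv k hk).2⟩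

lemma DeltaAC.congr {a b : ℝ} {q p : ℝ → EuclideanSpace ℝ (Fin n)} (h : DeltaAC T a b q)
    (heq : ∀ t ∈ Icc a b ∩ T, p t = q t) : DeltaAC T a b p := by
  intro ε hε
  obtain ⟨δ, hδ, h1⟩ := h ε hε
  refine ⟨δ, hδ, fun m u v hu hv huv hd hs => ?_⟩
  refine lt_of_eq_of_lt (Finset.sum_congr rfl fun k hk => ?_) (h1 m u v hu hv huv hd hs)
  rw [Finset.mem_range] at hk
  rw [heq _ (hu k hk), heq _ (hv k hk)]

lemma deltaAC_of_lipschitz {a b : ℝ} {q : ℝ → EuclideanSpace ℝ (Fin n)} {K : NNReal}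
    (h : LipschitzWith K q) : DeltaAC T a b q := by
  intro ε hε
  have hK : (0 : ℝ) < K + 1 := by positivity
  refine ⟨ε / (K + 1), by positivity, fun m u v _ _ huv _ hs => ?_⟩
  rw [lt_div_iff₀ hK] at hs
  have h0 : 0 ≤ ∑ k ∈ Finset.range m, (v k - u k) :=
    Finset.sum_nonneg fun k hk => sub_nonneg.2 (huv k (Finset.mem_range.1 hk))
  calc ∑ k ∈ Finset.range m, ‖q (v k) - q (u k)‖
      ≤ ∑ k ∈ Finset.range m, K * (v k - u k) := by
        refine Finset.sum_le_sum fun k hk => ?_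
        have h1 := h.dist_le_mul (v k) (u k)
        rwa [dist_eq_norm, Real.dist_eq,
          abs_of_nonneg (sub_nonneg.2 (huv k (Finset.mem_range.1 hk)))] at h1
    _ = K * ∑ k ∈ Finset.range m, (v k - u k) := by rw [Finset.mul_sum]
    _ < ε := by nlinarith

/-- Absolute continuity with the family of intervals indexed by an arbitrary finite set. -/
lemma DeltaAC.finset {a b : ℝ} {q : ℝ → EuclideanSpace ℝ (Fin n)} (h : DeltaAC T a b q)
    {ε : ℝ} (hε : 0 < ε) : ∃ δ > (0 : ℝ), ∀ (s : Finset ℕ) (u v : ℕ → ℝ),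
      (∀ k ∈ s, u k ∈ Icc a b ∩ T) → (∀ k ∈ s, v k ∈ Icc a b ∩ T) → (∀ k ∈ s, u k ≤ v k) →
      (∀ i ∈ s, ∀ j ∈ s, i ≠ j → Disjoint (Icc (u i) (v i)) (Icc (u j) (v j))) →
      (∑ k ∈ s, (v k - u k)) < δ → (∑ k ∈ s, ‖q (v k) - q (u k)‖) < ε := by
  obtain ⟨δ, hδ, h1⟩ := h ε hε
  refine ⟨δ, hδ, fun s u v hu hv huv hd hs => ?_⟩
  let e : ℕ → ℕ := fun i => if hi : i < s.card then s.orderEmbOfFin rfl ⟨i, hi⟩ else 0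
  have he : ∀ i (hi : i < s.card), e i = s.orderEmbOfFin rfl ⟨i, hi⟩ := fun i hi => dif_pos hi
  have hmem : ∀ i < s.card, e i ∈ s := fun i hi => by
    rw [he i hi]; exact Finset.orderEmbOfFin_mem _ _ _
  have hinj : ∀ i < s.card, ∀ j < s.card, e i = e j → i = j := fun i hi j hj hij => by
    rw [he i hi, he j hj] at hij
    simpa using (s.orderEmbOfFin rfl).injective hij
  have himg : (Finset.range s.card).image e = s := by
    apply Finset.eq_of_subset_of_card_le
    · intro k hk
      obtain ⟨i, hi, rfl⟩ := Finset.mem_image.1 hk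
      exact hmem i (Finset.mem_range.1 hi)
    · rw [Finset.card_image_of_injOn, Finset.card_range]
      intro i hi j hj
      exact hinj i (by simpa using hi) j (by simpa using hj)
  have hsum : ∀ g : ℕ → ℝ, ∑ k ∈ s, g k = ∑ i ∈ Finset.range s.card, g (e i) := by
    intro g
    conv_lhs => rw [← himg]
    refine Finset.sum_image ?_
    intro i hi j hj
    exact hinj i (by simpa using hi) j (by simpa using hj)
  rw [hsum] at hs ⊢
  exact h1 s.card (u ∘ e) (v ∘ e) (fun k hk => hu _ (hmem k hk)) (fun k hk => hv _ (hmem k hk))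
    (fun k hk => huv _ (hmem k hk))
    (fun i hi j hj hij => hd _ (hmem i hi) _ (hmem j hj) fun h => hij (hinj i hi j hj h)) hs

/-- Absolute continuity is inherited by a concatenation. Intervals are cut at the junction point
`b`; only those meeting the relevant side properly are kept on each side, since the degenerate
pieces `{b}` of the others would not be disjoint. -/
lemma DeltaAC.trans {a b c : ℝ} {q : ℝ → EuclideanSpace ℝ (Fin n)} (hb : b ∈ T)
    (h₁ : DeltaAC T a b q) (h₂ : DeltaAC T b c q) : DeltaAC T a c q := by
  intro ε hε
  obtain ⟨δ₁, hδ₁, H₁⟩ := h₁.finset (half_pos hε)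
  obtain ⟨δ₂, hδ₂, H₂⟩ := h₂.finset (half_pos hε)
  refine ⟨min δ₁ δ₂, lt_min hδ₁ hδ₂, fun m u v hu hv huv hd hs => ?_⟩
  have A := H₁ ((Finset.range m).filter fun k => u k < b) u (fun k => min (v k) b)
  have B := H₂ ((Finset.range m).filter fun k => b < v k) (fun k => max (u k) b) v
  simp only [Finset.mem_filter, Finset.mem_range, and_imp] at A B
  have A' := A
    (fun k hk hk' => ⟨⟨(hu k hk).1.1, hk'.le⟩, (hu k hk).2⟩)
    (fun k hk hk' => by
      refine ⟨⟨le_min (hv k hk).1.1 ((hu k hk).1.1.trans hk'.le), min_le_right _ _⟩, ?_⟩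
      rcases min_choice (v k) b with h | h <;> rw [h]
      exacts [(hv k hk).2, hb])
    (fun k hk hk' => le_min (huv k hk) hk'.le)
    (fun i hi _ j hj _ hij => (hd i hi j hj hij).mono
      (Icc_subset_Icc le_rfl (min_le_left _ _)) (Icc_subset_Icc le_rfl (min_le_left _ _)))
    (by
      refine lt_of_le_of_lt ?_ (hs.trans_le (min_le_left _ _))
      rw [Finset.sum_filter]
      refine Finset.sum_le_sum fun k hk => ?_
      have := huv k (Finset.mem_range.1 hk)
      split_ifs
      · linarith [min_le_left (v k) b]
      · linarith)
  have B' := B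
    (fun k hk hk' => by
      refine ⟨⟨le_max_right _ _, max_le (hu k hk).1.2 (hk'.le.trans (hv k hk).1.2)⟩, ?_⟩
      rcases max_choice (u k) b with h | h <;> rw [h]
      exacts [(hu k hk).2, hb])
    (fun k hk hk' => ⟨⟨hk'.le, (hv k hk).1.2⟩, (hv k hk).2⟩)
    (fun k hk hk' => max_le (huv k hk) hk'.le)
    (fun i hi _ j hj _ hij => (hd i hi j hj hij).mono
      (Icc_subset_Icc (le_max_left _ _) le_rfl) (Icc_subset_Icc (le_max_left _ _) le_rfl))
    (by
      refine lt_of_le_of_lt ?_ (hs.trans_le (min_le_right _ _))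
      rw [Finset.sum_filter]
      refine Finset.sum_le_sum fun k hk => ?_
      have := huv k (Finset.mem_range.1 hk)
      split_ifs
      · linarith [le_max_left (u k) b]
      · linarith)
  rw [Finset.sum_filter] at A' B'
  have hle : ∑ k ∈ Finset.range m, ‖q (v k) - q (u k)‖ ≤
      ∑ k ∈ Finset.range m, ((if u k < b then ‖q (min (v k) b) - q (u k)‖ else 0)
        + if b < v k then ‖q (v k) - q (max (u k) b)‖ else 0) := by
    refine Finset.sum_le_sum fun k hk => ?_
    have huvk := huv k (Finset.mem_range.1 hk)
    by_cases h1 : u k < b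
    · by_cases h2 : b < v k
      · rw [if_pos h1, if_pos h2, min_eq_right h2.le, max_eq_right h1.le, add_comm]
        exact norm_sub_le_norm_sub_add_norm_sub _ _ _
      · rw [if_pos h1, if_neg h2, min_eq_left (not_lt.1 h2), add_zero]
    · by_cases h2 : b < v k
      · rw [if_neg h1, if_pos h2, max_eq_left (not_lt.1 h1), zero_add]
      · have : v k = u k := le_antisymm ((not_lt.1 h2).trans (not_lt.1 h1)) huvk
        rw [if_neg h1, if_neg h2, this]
        simp
  rw [Finset.sum_add_distrib] at hle
  linarith

lemma DeltaAC.continuousWithinAt {a b : ℝ} {q : ℝ → EuclideanSpace ℝ (Fin n)}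
    (h : DeltaAC T a b q) (hab : a < b) (hb : b ∈ T) :
    ContinuousWithinAt q (T ∩ Iic b) b := by
  rw [Metric.continuousWithinAt_iff]
  intro ε hε
  obtain ⟨δ, hδ, h1⟩ := h ε hε
  refine ⟨min δ (b - a), lt_min hδ (sub_pos.2 hab), fun s hs hsb => ?_⟩
  have hsb' : s ≤ b := hs.2
  rw [Real.dist_eq, abs_sub_comm, abs_of_nonneg (sub_nonneg.2 hsb'), lt_min_iff] at hsb
  have := h1 1 (fun _ => s) (fun _ => b) (fun _ _ => ⟨⟨by linarith, hsb'⟩, hs.1⟩)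
    (fun _ _ => ⟨⟨hab.le, le_rfl⟩, hb⟩) (fun _ _ => hsb') (fun i hi j hj hij => by omega)
    (by simpa using hsb.1)
  rw [dist_comm, dist_eq_norm]
  simpa using this

end derivative
/-! ### Local solutions -/

section localsol
variable {n : ℕ} {T : Set ℝ} {Ω : Set (EuclideanSpace ℝ (Fin n))}
  {f : EuclideanSpace ℝ (Fin n) → ℝ → EuclideanSpace ℝ (Fin n)}

/-- A local solution piece on `[c, d]_T`, without initial condition. The curve `p` is defined and
Lipschitz on all of `ℝ`; in particular it is continuous at `c` from the left, which the Δ-derivative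
at `c` requires when `c` is left-dense and right-scattered. -/
structure LocSol (T : Set ℝ) (Ω : Set (EuclideanSpace ℝ (Fin n)))
    (f : EuclideanSpace ℝ (Fin n) → ℝ → EuclideanSpace ℝ (Fin n))
    (p : ℝ → EuclideanSpace ℝ (Fin n)) (c d : ℝ) : Prop where
  lt : c < d
  left_mem : c ∈ T
  right_mem : d ∈ T
  mem : ∀ t ∈ Icc c d ∩ T, p t ∈ Ω
  lip : ∃ K, LipschitzWith K p
  deriv : ∀ᵐ t ∂((deltaMeasure T).restrict (Ico c d ∩ T)), HasDeltaDerivAt T p (f (p t) t) t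

lemma locSol_picard (hT : IsClosed T) (hf : DeltaCaratheodory T Ω f) {c d ts : ℝ} (hc : c ∈ T)
    (hd : d ∈ T) (hcd : c < d) (hts : ts ∈ Icc c d) {x : EuclideanSpace ℝ (Fin n)} {R M L : ℝ}
    (hR : 0 ≤ R) (hM : 0 ≤ M) (hL : 0 ≤ L) (hball : Metric.closedBall x R ⊆ Ω)
    (hbd : ∀ᵐ t ∂((deltaMeasure T).restrict (Ico c d ∩ T)),
      ∀ y ∈ Metric.closedBall x R, ‖f y t‖ ≤ M)
    (hlip : ∀ᵐ t ∂((deltaMeasure T).restrict (Ico c d ∩ T)),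
      ∀ y ∈ Metric.closedBall x R, ∀ z ∈ Metric.closedBall x R, ‖f y t - f z t‖ ≤ L * ‖y - z‖)
    (hMR : M * (d - c) ≤ R) (hLd : L * (d - c) ≤ 1 / 2) :
    ∃ p, LocSol T Ω f p c d ∧ p ts = x := by
  lift R to NNReal using hR
  lift M to NNReal using hM
  have hlip' := ae_floor hT hc hd hlip
  have hsub : Ico c d ∩ T ⊆ tsUpDomain T := fun t ht =>
    ⟨ht.2, fun h => absurd (h.2 hd) (not_le.2 ht.1.2)⟩
  have hm : ∀ y ∈ Metric.closedBall x R,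
      AEMeasurable (fun t => f y t) ((deltaMeasure T).restrict (Ico c d ∩ T)) := fun y hy =>
    (hf.1 y (hball hy)).mono_measure (Measure.restrict_mono_set _ hsub)
  obtain ⟨p, hpL, hpb, hpi, hp⟩ := picard_delay ⟨ts, hts⟩ x R M L hL (tsFloor T c)
    (fun u y => f y (tsFloor T c u)) (ae_floor hT hc hd hbd) hlip'
    (fun p hp hpb => caratheodory_comp hT hc hd hm hlip' p hp hpb) hMR hLd
  set G : ℝ → EuclideanSpace ℝ (Fin n) := fun u => f (p (tsFloor T c u)) (tsFloor T c u) with hG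
  have hsubint : ∀ s ∈ Icc c d, ∀ t ∈ Icc c d, IntervalIntegrable G volume s t := by
    intro s hs t ht
    refine hpi.mono_set ?_
    rw [uIcc_of_le hcd.le]
    exact uIcc_subset_Icc hs ht
  have hdiff : ∀ s ∈ Icc c d, ∀ t ∈ Icc c d, p t = p s + ∫ u in s..t, G u := by
    intro s hs t ht
    rw [hp t ht, hp s hs, add_assoc,
      intervalIntegral.integral_add_adjacent_intervals (hsubint _ hts _ hs) (hsubint _ hs _ ht)]
  refine ⟨p, ⟨hcd, hc, hd, fun t _ => hball (hpb t), ⟨M, hpL⟩, ?_⟩, ?_⟩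
  swap
  · have := hp ts hts
    simpa using this
  have hatom : ∀ r ∈ T, RightScattered T r → r ∈ Ico c d ∩ T →
      HasDeltaDerivAt T p (f (p r) r) r := by
    intro r hr hs hrI
    refine hasDeltaDerivAt_of_step hT hs ?_ hpL.continuous.continuousWithinAt
    have hσd : tsSigma T r ≤ d := hs.sigma_le hT hd hrI.1.2
    have hrσ : r ≤ tsSigma T r := le_sigma hT r
    rw [hdiff r ⟨hrI.1.1, hrI.1.2.le⟩ (tsSigma T r) ⟨hrI.1.1.trans hrσ, hσd⟩]
    congr 1
    -- the integrand is constant across the gap `(r, σ r)`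
    have hne : ∀ᵐ u ∂(volume : Measure ℝ), u ≠ tsSigma T r := by
      simp [ae_iff, measure_singleton]
    rw [intervalIntegral.integral_congr_ae (g := fun _ => f (p r) r)]
    · rw [intervalIntegral.integral_const]
      rfl
    · filter_upwards [hne] with u hu hI
      rw [uIoc_of_le hrσ] at hI
      simp only [hG]
      rw [floor_gap hT hc hr hrI.1.1 hs hI.1.le (lt_of_le_of_ne hI.2 hu)]
  rw [ae_delta_iff hT (measurableSet_Ico.inter hT.measurableSet)]
  refine ⟨?_, hatom⟩
  have hnc : ∀ᵐ u ∂(volume : Measure ℝ), u ≠ c := by simp [ae_iff, measure_singleton]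
  filter_upwards [hpi.ae_hasDerivAt_integral, hnc] with t ht htc htT htI
  by_cases hs : RightScattered T t
  · exact hatom t htT hs htI
  have hlt : c < t := lt_of_le_of_ne htI.1.1 (Ne.symm htc)
  have h1 := ht (by rw [uIcc_of_le hcd.le]; exact ⟨htI.1.1, htI.1.2.le⟩) c left_mem_uIcc
  refine hasDeltaDerivAt_of_hasDerivAt (not_rightScattered hT hs) ?_
  have hfl : tsFloor T c t = t := floor_eq hT hc htT htI.1.1
  have h2 := h1.const_add (p c)
  have hGt : G t = f (p t) t := by simp only [hG, hfl]
  rw [hGt] at h2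
  refine h2.congr_of_eventuallyEq ?_
  filter_upwards [Ioo_mem_nhds hlt htI.1.2] with s hs'
  exact hdiff c ⟨le_rfl, hcd.le⟩ s ⟨hs'.1.le, hs'.2.le⟩

/-- Across the gap to the right of a right-scattered point, the affine interpolant is a local
solution. -/
lemma locSol_gap (hT : IsClosed T) {r : ℝ} (hr : r ∈ T) (hs : RightScattered T r)
    {x : EuclideanSpace ℝ (Fin n)} (hx : x ∈ Ω) (hx' : x + tsGrain T r • f x r ∈ Ω) :
    LocSol T Ω f (fun t => x + (t - r) • f x r) r (tsSigma T r) := by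
  have hL : LipschitzWith ‖f x r‖₊ (fun t : ℝ => x + (t - r) • f x r) := by
    refine LipschitzWith.of_dist_le_mul fun s t => ?_
    rw [dist_eq_norm, add_sub_add_left_eq_sub, ← sub_smul, sub_sub_sub_cancel_right, norm_smul,
      mul_comm, ← dist_eq_norm]
    rfl
  have hI : ∀ t ∈ Ico r (tsSigma T r) ∩ T, t = r := by
    intro t ht
    by_contra hne
    have := hs.sigma_le hT ht.2 (lt_of_le_of_ne ht.1.1 (Ne.symm hne))
    exact absurd ht.1.2 (not_lt.2 this)
  have hD : HasDeltaDerivAt T (fun t => x + (t - r) • f x r)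
      (f (x + (r - r) • f x r) r) r := by
    refine hasDeltaDerivAt_of_step hT hs ?_ hL.continuous.continuousWithinAt
    simp [tsGrain]
  refine ⟨hs, hr, hs.sigma_mem hT, ?_, ⟨_, hL⟩, ?_⟩
  · intro t ht
    rcases ht.1.2.lt_or_eq with h | h
    · rw [hI t ⟨⟨ht.1.1, h⟩, ht.2⟩]
      simpa using hx
    · rw [h]
      exact hx'
  · rw [ae_delta_iff hT (measurableSet_Ico.inter hT.measurableSet)]
    refine ⟨ae_of_all _ fun t _ ht => ?_, fun t _ _ ht => ?_⟩ <;>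
    · rw [hI t ht]
      exact hD

lemma exists_small {A B : ℝ} (hB : 0 < B) (hA : 0 ≤ A) :
    ∃ η > 0, ∀ h, 0 ≤ h → h < η → A * h ≤ B := by
  refine ⟨B / (A + 1), by positivity, fun h h0 hh => ?_⟩
  rw [lt_div_iff₀ (by positivity)] at hh
  nlinarith

/-- Existence to the right of any non-maximal point. -/
lemma locSol_forward (hT : IsClosed T) (hf : DeltaCaratheodory T Ω f) (hinf : HInfty T Ω f)
    (hrd : HrdLocLip T Ω f) (hst : HforwStab T Ω f) {b : ℝ} (hb : b ∈ T)
    (hmax : ¬ IsGreatest T b) {x : EuclideanSpace ℝ (Fin n)} (hx : x ∈ Ω) :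
    ∃ d p, LocSol T Ω f p b d ∧ p b = x := by
  by_cases hs : RightScattered T b
  · exact ⟨_, _, locSol_gap hT hb hs hx (hst b hb hs x hx), by simp⟩
  have hrdb := not_rightScattered hT hs
  obtain ⟨R, hR, δ, hδ, L, hL, hball, hδT, hlip⟩ := hrd x hx b hb hmax hrdb
  obtain ⟨M, hM, hbd⟩ := hinf _ hball (isCompact_closedBall x R) b hb _ hδT (by linarith)
  obtain ⟨η₁, hη₁, H₁⟩ := exists_small hR hM
  obtain ⟨η₂, hη₂, H₂⟩ := exists_small (B := (1 : ℝ) / 2) (by norm_num) hL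
  have hne : ({s | s ∈ T ∧ b < s}).Nonempty := ⟨b + δ, hδT, by linarith⟩
  unfold RightDense tsSigma at hrdb
  rw [if_pos hne] at hrdb
  have hpos : b < b + min δ (min η₁ η₂) := by
    have : 0 < min δ (min η₁ η₂) := lt_min hδ (lt_min hη₁ hη₂)
    linarith
  obtain ⟨d, hd, hdlt⟩ := exists_lt_of_csInf_lt hne (hrdb.trans_lt hpos)
  have hdb : d - b < min δ (min η₁ η₂) := by linarith
  have hbd' : b < d := hd.2
  simp only [lt_min_iff] at hdb
  have hsub : Ico b d ∩ T ⊆ Ico b (b + δ) ∩ T :=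
    inter_subset_inter_left _ (Ico_subset_Ico_right (by linarith))
  obtain ⟨p, hp, hpx⟩ := locSol_picard hT hf hb hd.1 hbd' ⟨le_rfl, hbd'.le⟩ hR.le hM hL hball
    (ae_restrict_of_ae_restrict_of_subset hsub hbd)
    (ae_restrict_of_ae_restrict_of_subset hsub hlip)
    (H₁ _ (by linarith) hdb.2.1) (H₂ _ (by linarith) hdb.2.2)
  exact ⟨d, p, hp, hpx⟩

/-- Existence to the left of any non-minimal point. Across a gap one solves `G⁺(ρ(a)) y = x`,
which is where surjectivity of `G⁺` enters. -/
lemma locSol_backward (hT : IsClosed T) (hf : DeltaCaratheodory T Ω f) (hinf : HInfty T Ω f)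
    (hld : HldLocLip T Ω f) (hre : HbackRegr T Ω f) {a : ℝ} (ha : a ∈ T)
    (hmin : ¬ IsLeast T a) {x : EuclideanSpace ℝ (Fin n)} (hx : x ∈ Ω) :
    ∃ c p, LocSol T Ω f p c a ∧ p a = x := by
  have hlt : ∃ s ∈ T, s < a := by
    by_contra hcon
    push Not at hcon
    exact hmin ⟨ha, hcon⟩
  obtain ⟨hρT, hρle, hρ⟩ := rho_mem_of_lt hT hlt
  by_cases hs : LeftScattered T a
  · have hσ : tsSigma T (tsRho T a) = a := by
      obtain ⟨h1, h2, h3⟩ := sigma_mem_of_lt hT ⟨a, ha, hs⟩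
      refine le_antisymm (h3 a ha hs) ?_
      by_contra hcon
      have h4 := le_antisymm (hρ _ h1 (not_le.1 hcon)) h2
      unfold tsSigma at h4
      have hne : ({s | s ∈ T ∧ tsRho T a < s}).Nonempty := ⟨a, ha, hs⟩
      rw [if_pos hne] at h4
      obtain ⟨s, hs1, hs2⟩ := exists_lt_of_csInf_lt hne (h4.trans_lt hs)
      exact absurd hs1.2 (not_lt.2 (hρ s hs1.1 hs2))
    have hrs : RightScattered T (tsRho T a) := by
      unfold RightScattered
      rw [hσ]
      exact hs
    obtain ⟨y, hy, hyx⟩ := (hre _ hρT hrs).surjOn (mem_univ x)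
    have hyx' : y + tsGrain T (tsRho T a) • f y (tsRho T a) = x := hyx
    have := locSol_gap hT hρT hrs hy (hyx' ▸ hx)
    rw [hσ] at this
    refine ⟨_, _, this, ?_⟩
    rw [← hyx', tsGrain, hσ]
  have hlda : LeftDense T a := le_antisymm hρle (not_lt.1 hs)
  obtain ⟨R, hR, δ, hδ, L, hL, hball, hδT, hlip⟩ := hld x hx a ha hmin hlda
  obtain ⟨M, hM, hbd⟩ := hinf _ hball (isCompact_closedBall x R) _ hδT a ha (by linarith)
  obtain ⟨η₁, hη₁, H₁⟩ := exists_small hR hM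
  obtain ⟨η₂, hη₂, H₂⟩ := exists_small (B := (1 : ℝ) / 2) (by norm_num) hL
  have hne : ({s | s ∈ T ∧ s < a}).Nonempty := ⟨a - δ, hδT, by linarith⟩
  unfold LeftDense tsRho at hlda
  rw [if_pos hne] at hlda
  have hpos : a - min δ (min η₁ η₂) < a := by
    have : 0 < min δ (min η₁ η₂) := lt_min hδ (lt_min hη₁ hη₂)
    linarith
  obtain ⟨c, hc, hclt⟩ := exists_lt_of_lt_csSup hne (hpos.trans_eq hlda.symm)
  have hca : a - c < min δ (min η₁ η₂) := by linarith
  have hca' : c < a := hc.2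
  simp only [lt_min_iff] at hca
  have hsub : Ico c a ∩ T ⊆ Ico (a - δ) a ∩ T :=
    inter_subset_inter_left _ (Ico_subset_Ico_left (by linarith))
  obtain ⟨p, hp, hpx⟩ := locSol_picard hT hf hc.1 ha hca' ⟨hca'.le, le_rfl⟩ hR.le hM hL hball
    (ae_restrict_of_ae_restrict_of_subset hsub hbd)
    (ae_restrict_of_ae_restrict_of_subset hsub hlip)
    (H₁ _ (by linarith) hca.2.1) (H₂ _ (by linarith) hca.2.2)
  exact ⟨c, p, hp, hpx⟩

end localsol
/-! ### Gluing -/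

section glue
variable {n : ℕ} {T : Set ℝ} {Ω : Set (EuclideanSpace ℝ (Fin n))}
  {f : EuclideanSpace ℝ (Fin n) → ℝ → EuclideanSpace ℝ (Fin n)}
  {t₀ : ℝ} {q₀ : EuclideanSpace ℝ (Fin n)} {q p : ℝ → EuclideanSpace ℝ (Fin n)}

lemma IsSolIcc.mono {a b a' b' : ℝ} (h : IsSolIcc T Ω f t₀ q₀ q a b) (ha : a ≤ a')
    (hb : b' ≤ b) : IsSolIcc T Ω f t₀ q₀ q a' b' :=
  ⟨fun t ht => h.1 t ⟨Icc_subset_Icc ha hb ht.1, ht.2⟩, h.2.1.mono ha hb, h.2.2.1,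
    ae_restrict_of_ae_restrict_of_subset
      (inter_subset_inter_left _ (Ico_subset_Ico ha hb)) h.2.2.2⟩

/-- Joining two curves at `b`: the Δ-equation holds a.e. for the concatenation `r`. At the junction
point itself nothing is needed unless it is right-scattered, in which case the step to `σ b` comes
from the right piece and left-continuity from the left one. -/
lemma ae_deriv_glue (hT : IsClosed T) {a b c : ℝ} {r : ℝ → EuclideanSpace ℝ (Fin n)} (hb : b ∈ T)
    (hab : a ≤ b) (hbc : b < c)
    (hq : ∀ᵐ t ∂((deltaMeasure T).restrict (Ico a b ∩ T)), HasDeltaDerivAt T q (f (q t) t) t)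
    (hp : ∀ᵐ t ∂((deltaMeasure T).restrict (Ico b c ∩ T)), HasDeltaDerivAt T p (f (p t) t) t)
    (hrq : ∀ t ≤ b, r t = q t) (hrp : ∀ t, b ≤ t → r t = p t)
    (hcont : ContinuousWithinAt q (T ∩ Iic b) b) :
    ∀ᵐ t ∂((deltaMeasure T).restrict (Ico a c ∩ T)), HasDeltaDerivAt T r (f (r t) t) t := by
  rw [ae_delta_iff hT (measurableSet_Ico.inter hT.measurableSet)] at hq hp ⊢
  have hL : ∀ t < b, HasDeltaDerivAt T q (f (q t) t) t → HasDeltaDerivAt T r (f (r t) t) t := by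
    intro t ht h
    rw [hrq t ht.le]
    exact h.congr (Iio b) (Iio_mem_nhds ht) (fun s hs => hrq s (le_of_lt hs.1))
      (hrq _ (sigma_le_of_lt hT hb ht))
  have hR : ∀ t, b < t → HasDeltaDerivAt T p (f (p t) t) t →
      HasDeltaDerivAt T r (f (r t) t) t := by
    intro t ht h
    rw [hrp t ht.le]
    exact h.congr (Ioi b) (Ioi_mem_nhds ht) (fun s hs => hrp s (le_of_lt hs.1))
      (hrp _ (ht.le.trans (le_sigma hT t)))
  have hnb : ∀ᵐ u ∂(volume : Measure ℝ), u ≠ b := by simp [ae_iff, measure_singleton]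
  constructor
  · filter_upwards [hq.1, hp.1, hnb] with t h1 h2 h3 htT htI
    rcases lt_or_gt_of_ne h3 with h | h
    · exact hL t h (h1 htT ⟨⟨htI.1.1, h⟩, htT⟩)
    · exact hR t h (h2 htT ⟨⟨h.le, htI.1.2⟩, htT⟩)
  · intro t htT hs htI
    rcases lt_trichotomy t b with h | h | h
    · exact hL t h (hq.2 t htT hs ⟨⟨htI.1.1, h⟩, htT⟩)
    · subst h
      refine hasDeltaDerivAt_of_step hT hs ?_ ?_
      · rw [hrp _ (le_sigma hT t), hrp t le_rfl]
        exact (hp.2 t htT hs ⟨⟨le_rfl, hbc⟩, htT⟩).step htT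
      · exact hcont.congr (fun s hs => hrq s hs.2) (hrq t le_rfl)
    · exact hR t h (hp.2 t htT hs ⟨⟨h.le, htI.1.2⟩, htT⟩)

lemma glue_forward (hT : IsClosed T) {a b d : ℝ} (hq : IsSolIcc T Ω f t₀ q₀ q a b)
    (hp : LocSol T Ω f p b d) (hpq : p b = q b) (hab : a < b) (htb : t₀ ≤ b) :
    IsSolIcc T Ω f t₀ q₀ (fun t => if t ≤ b then q t else p t) a d := by
  obtain ⟨K, hK⟩ := hp.lip
  have hrq : ∀ t ≤ b, (fun t => if t ≤ b then q t else p t) t = q t := fun t ht => if_pos ht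
  have hrp : ∀ t, b ≤ t → (fun t => if t ≤ b then q t else p t) t = p t := by
    intro t ht
    rcases ht.eq_or_lt with h | h
    · subst h
      simp [hpq]
    · exact if_neg (not_le.2 h)
  refine ⟨?_, ?_, ?_, ?_⟩
  · intro t ht
    rcases le_total t b with h | h
    · rw [hrq t h]; exact hq.1 t ⟨⟨ht.1.1, h⟩, ht.2⟩
    · rw [hrp t h]; exact hp.mem t ⟨⟨h, ht.1.2⟩, ht.2⟩
  · refine DeltaAC.trans hp.left_mem (hq.2.1.congr fun t ht => hrq t ht.1.2) ?_
    exact (deltaAC_of_lipschitz hK).congr fun t ht => hrp t ht.1.1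
  · rw [hrq t₀ htb]; exact hq.2.2.1
  · exact ae_deriv_glue hT hp.left_mem hab.le hp.lt hq.2.2.2 hp.deriv hrq hrp
      (hq.2.1.continuousWithinAt hab hp.left_mem)

lemma glue_backward (hT : IsClosed T) {a b c : ℝ} (hq : IsSolIcc T Ω f t₀ q₀ q a b)
    (hp : LocSol T Ω f p c a) (hpq : p a = q a) (hab : a < b) (hta : a ≤ t₀) :
    IsSolIcc T Ω f t₀ q₀ (fun t => if t ≤ a then p t else q t) c b := by
  obtain ⟨K, hK⟩ := hp.lip
  have hrp : ∀ t ≤ a, (fun t => if t ≤ a then p t else q t) t = p t := fun t ht => if_pos ht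
  have hrq : ∀ t, a ≤ t → (fun t => if t ≤ a then p t else q t) t = q t := by
    intro t ht
    rcases ht.eq_or_lt with h | h
    · subst h
      simp [hpq]
    · exact if_neg (not_le.2 h)
  refine ⟨?_, ?_, ?_, ?_⟩
  · intro t ht
    rcases le_total t a with h | h
    · rw [hrp t h]; exact hp.mem t ⟨⟨ht.1.1, h⟩, ht.2⟩
    · rw [hrq t h]; exact hq.1 t ⟨⟨h, ht.1.2⟩, ht.2⟩
  · refine DeltaAC.trans hp.right_mem ((deltaAC_of_lipschitz hK).congr fun t ht => hrp t ht.1.2) ?_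
    exact hq.2.1.congr fun t ht => hrq t ht.1.1
  · rw [hrq t₀ hta]; exact hq.2.2.1
  · exact ae_deriv_glue hT hp.right_mem hp.lt.le hab hp.deriv hq.2.2.2 hrp hrq
      hK.continuous.continuousWithinAt

end glue

/-! ### Maximal solutions -/

section maximal
variable {n : ℕ} {T : Set ℝ} {Ω : Set (EuclideanSpace ℝ (Fin n))}
  {f : EuclideanSpace ℝ (Fin n) → ℝ → EuclideanSpace ℝ (Fin n)}
  {t₀ : ℝ} {q₀ : EuclideanSpace ℝ (Fin n)} {q : ℝ → EuclideanSpace ℝ (Fin n)} {I : Set ℝ}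

lemma Trile.le {a b : ℝ} (h : Trile T t₀ a b) : a ≤ t₀ ∧ t₀ ≤ b ∧ a < b := by
  rcases h with ⟨-, h1, h2⟩ | ⟨-, h1, h2⟩ | ⟨-, -, h1, h2⟩
  · exact ⟨h1.le, h2.le, h1.trans_lt h2⟩
  · exact ⟨h1.le, h2.le, h1.trans_eq h2⟩
  · exact ⟨h1.le, h2.le, h1.trans h2⟩

lemma Trile.with_right {a b b' : ℝ} (h : Trile T t₀ a b) (hg : ¬ IsGreatest T t₀)
    (hb : t₀ < b') : Trile T t₀ a b' := by
  rcases h with ⟨h1, h2, -⟩ | ⟨h1, -⟩ | ⟨h1, h2, h3, -⟩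
  exacts [Or.inl ⟨h1, h2, hb⟩, absurd h1 hg, Or.inr (Or.inr ⟨h1, h2, h3, hb⟩)]

lemma Trile.with_left {a a' b : ℝ} (h : Trile T t₀ a b) (hl : ¬ IsLeast T t₀)
    (ha : a' < t₀) : Trile T t₀ a' b := by
  rcases h with ⟨h1, -⟩ | ⟨h1, -, h2⟩ | ⟨h1, h2, -, h3⟩
  exacts [absurd h1 hl, Or.inr (Or.inl ⟨h1, ha, h2⟩), Or.inr (Or.inr ⟨h1, h2, ha, h3⟩)]

lemma ordConnected_union_Icc {b d x : ℝ} (hI : I.OrdConnected) (hx : x ∈ I) (hx' : x ∈ Icc b d) :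
    (I ∪ Icc b d).OrdConnected :=
  (IsPreconnected.union x hx hx' (isPreconnected_iff_ordConnected.2 hI)
    isPreconnected_Icc).ordConnected

/-- If local solutions exist to the right of every non-maximal point, a maximal solution has no last
point other than the maximum of `T`: gluing a local solution there would extend it. -/
lemma no_top (hT : IsClosed T) (hq : IsMaxSol T Ω f t₀ q₀ q I) (hg : ¬ IsGreatest T t₀)
    (hloc : ∀ b ∈ T, ¬ IsGreatest T b → ∀ x ∈ Ω, ∃ d p, LocSol T Ω f p b d ∧ p b = x)
    {b : ℝ} (hbI : b ∈ I) (hbT : b ∈ T) (htb : t₀ < b) (htop : ∀ t ∈ I ∩ T, t ≤ b)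
    (hbg : ¬ IsGreatest T b) : False := by
  obtain ⟨⟨⟨hI, a₀, ha₀, b₀, hb₀, htr⟩, hΩ, hsol⟩, hmax⟩ := hq
  obtain ⟨d, p, hp, hpb⟩ := hloc b hbT hbg (q b) (hΩ b ⟨hbI, hbT⟩)
  have hbd := hp.lt
  have hdI : d ∈ I ∪ Icc b d := Or.inr ⟨hbd.le, le_rfl⟩
  have key : ∀ a ∈ (I ∪ Icc b d) ∩ T, ∀ b' ∈ (I ∪ Icc b d) ∩ T, Trile T t₀ a b' →
      IsSolIcc T Ω f t₀ q₀ (fun t => if t ≤ b then q t else p t) a b' := by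
    intro a ha b' hb' h
    have haI : a ∈ I := by
      rcases ha.1 with h' | h'
      · exact h'
      · exact absurd (h'.1.trans h.le.1) (not_le.2 htb)
    have hb'd : b' ≤ d := by
      rcases hb'.1 with h' | h'
      · exact (htop b' ⟨h', hb'.2⟩).trans hbd.le
      · exact h'.2
    exact (glue_forward hT (hsol a ⟨haI, ha.2⟩ b ⟨hbI, hbT⟩ (h.with_right hg htb)) hp hpb
      (h.le.1.trans_lt htb) htb.le).mono le_rfl hb'd
  have hI1 : IsSol T Ω f t₀ q₀ (fun t => if t ≤ b then q t else p t) (I ∪ Icc b d) := by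
    refine ⟨⟨ordConnected_union_Icc hI hbI ⟨le_rfl, hbd.le⟩, a₀, ⟨Or.inl ha₀.1, ha₀.2⟩, b₀,
      ⟨Or.inl hb₀.1, hb₀.2⟩, htr⟩, ?_, key⟩
    rintro t ⟨ht | ht, htT⟩
    · simp only [if_pos (htop t ⟨ht, htT⟩)]
      exact hΩ t ⟨ht, htT⟩
    · rcases ht.1.eq_or_lt with h | h
      · subst h
        simp only [le_rfl, if_true]
        exact hΩ b ⟨hbI, hbT⟩
      · simp only [if_neg (not_le.2 h)]
        exact hp.mem t ⟨ht, htT⟩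
  have heq := hmax _ _ hI1 ⟨inter_subset_inter_left _ subset_union_left,
    fun t ht => if_pos (htop t ht)⟩
  have hd : d ∈ I ∩ T := heq ▸ (⟨hdI, hp.right_mem⟩ : d ∈ (I ∪ Icc b d) ∩ T)
  exact absurd (htop d hd) (not_le.2 hbd)

/-- If local solutions exist to the left of every non-minimal point, a maximal solution has no first
point other than the minimum of `T`: gluing a local solution there would extend it. -/
lemma no_bot (hT : IsClosed T) (hq : IsMaxSol T Ω f t₀ q₀ q I) (hl : ¬ IsLeast T t₀)
    (hloc : ∀ a ∈ T, ¬ IsLeast T a → ∀ x ∈ Ω, ∃ c p, LocSol T Ω f p c a ∧ p a = x)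
    {a : ℝ} (haI : a ∈ I) (haT : a ∈ T) (hta : a < t₀) (hbot : ∀ t ∈ I ∩ T, a ≤ t)
    (hal : ¬ IsLeast T a) : False := by
  obtain ⟨⟨⟨hI, a₀, ha₀, b₀, hb₀, htr⟩, hΩ, hsol⟩, hmax⟩ := hq
  obtain ⟨c, p, hp, hpa⟩ := hloc a haT hal (q a) (hΩ a ⟨haI, haT⟩)
  have hca := hp.lt
  have hcI : c ∈ I ∪ Icc c a := Or.inr ⟨le_rfl, hca.le⟩
  have hagree : ∀ t ∈ I ∩ T, (fun t => if t ≤ a then p t else q t) t = q t := by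
    intro t ht
    rcases (hbot t ht).eq_or_lt with h | h
    · subst h
      simp [hpa]
    · exact if_neg (not_le.2 h)
  have key : ∀ a' ∈ (I ∪ Icc c a) ∩ T, ∀ b ∈ (I ∪ Icc c a) ∩ T, Trile T t₀ a' b →
      IsSolIcc T Ω f t₀ q₀ (fun t => if t ≤ a then p t else q t) a' b := by
    intro a' ha' b hb h
    have hbI : b ∈ I := by
      rcases hb.1 with h' | h'
      · exact h'
      · exact absurd (h.le.2.1.trans h'.2) (not_le.2 hta)
    have hca' : c ≤ a' := by
      rcases ha'.1 with h' | h'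
      · exact hca.le.trans (hbot a' ⟨h', ha'.2⟩)
      · exact h'.1
    exact (glue_backward hT (hsol a ⟨haI, haT⟩ b ⟨hbI, hb.2⟩ (h.with_left hl hta)) hp hpa
      (hta.trans_le h.le.2.1) hta.le).mono hca' le_rfl
  have hI1 : IsSol T Ω f t₀ q₀ (fun t => if t ≤ a then p t else q t) (I ∪ Icc c a) := by
    refine ⟨⟨ordConnected_union_Icc hI haI ⟨hca.le, le_rfl⟩, a₀, ⟨Or.inl ha₀.1, ha₀.2⟩, b₀,
      ⟨Or.inl hb₀.1, hb₀.2⟩, htr⟩, ?_, key⟩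
    rintro t ⟨ht | ht, htT⟩
    · rw [hagree t ⟨ht, htT⟩]
      exact hΩ t ⟨ht, htT⟩
    · simp only [if_pos ht.2]
      exact hp.mem t ⟨ht, htT⟩
  have heq := hmax _ _ hI1 ⟨inter_subset_inter_left _ subset_union_left, hagree⟩
  have hc : c ∈ I ∩ T := heq ▸ (⟨hcI, hp.left_mem⟩ : c ∈ (I ∪ Icc c a) ∩ T)
  exact absurd (hbot c hc) (not_le.2 hca)

/-- If local solutions exist to the right of every non-maximal point, then to the right of `t₀` a
maximal solution is either defined everywhere or exactly up to a
left-dense point `b`, exclusive: `b` is the infimum of the missing points. -/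
lemma forward_dichotomy (hT : IsClosed T) (hq : IsMaxSol T Ω f t₀ q₀ q I)
    (hg : ¬ IsGreatest T t₀)
    (hloc : ∀ b ∈ T, ¬ IsGreatest T b → ∀ x ∈ Ω, ∃ d p, LocSol T Ω f p b d ∧ p b = x) :
    (∀ t ∈ T, t₀ ≤ t → t ∈ I) ∨
      ∃ b ∈ T, t₀ < b ∧ LeftDense T b ∧ ∀ t ∈ T, t₀ ≤ t → (t ∈ I ↔ t < b) := by
  obtain ⟨hI, a₀, ha₀, b₁, hb₁, htr⟩ := hq.1.1
  have hI' := hI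
  have htb : t₀ < b₁ := by
    rcases htr with ⟨-, -, h⟩ | ⟨h, -⟩ | ⟨-, -, -, h⟩
    exacts [h, absurd h hg, h]
  have ht₀I : t₀ ∈ I := hI.out ha₀.1 hb₁.1 ⟨htr.le.1, htr.le.2.1⟩
  by_cases hall : ∀ t ∈ T, t₀ ≤ t → t ∈ I
  · exact Or.inl hall
  right
  push Not at hall
  obtain ⟨s, hsT, hts, hsI⟩ := hall
  set S := {t | t ∈ T ∧ t₀ ≤ t ∧ t ∉ I} with hS
  have hSne : S.Nonempty := ⟨s, hsT, hts, hsI⟩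
  have hSb₁ : ∀ t ∈ S, b₁ ≤ t := by
    intro t ht
    by_contra hcon
    exact ht.2.2 (hI.out ht₀I hb₁.1 ⟨ht.2.1, (not_le.1 hcon).le⟩)
  have hbdd : BddBelow S := ⟨b₁, hSb₁⟩
  have hbT : sInf S ∈ T :=
    closure_minimal (fun x hx => hx.1) hT (csInf_mem_closure hSne hbdd)
  have hb₁b : b₁ ≤ sInf S := le_csInf hSne hSb₁
  have htb' : t₀ < sInf S := htb.trans_le hb₁b
  have hin : ∀ t ∈ T, t₀ ≤ t → t < sInf S → t ∈ I := by
    intro t ht h1 h2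
    by_contra hcon
    exact absurd (csInf_le hbdd ⟨ht, h1, hcon⟩) (not_le.2 h2)
  have hbI : sInf S ∉ I := by
    intro hbI
    have hgt : ∀ x, sInf S < x → x ∉ I := by
      intro x hx hxI
      obtain ⟨y, hy, hyx⟩ := exists_lt_of_csInf_lt hSne hx
      exact hy.2.2 (hI.out ht₀I hxI ⟨hy.2.1, hyx.le⟩)
    refine no_top hT hq hg hloc hbI hbT htb' ?_ ?_
    · intro t ht
      by_contra hcon
      exact hgt t (not_le.1 hcon) ht.1
    · intro hgr
      have : s ≤ sInf S := hgr.2 hsT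
      have h2 := le_antisymm this (csInf_le hbdd ⟨hsT, hts, hsI⟩)
      exact hsI (h2 ▸ hbI)
  have hup : ∀ t ∈ I, t₀ ≤ t → t < sInf S := by
    intro t ht h
    by_contra hcon
    exact hbI (hI.out ht₀I ht ⟨htb'.le, not_lt.1 hcon⟩)
  refine ⟨sInf S, hbT, htb', ?_, fun t ht h => ⟨fun h' => hup t h' h, hin t ht h⟩⟩
  have hlt : b₁ < sInf S := hup b₁ hb₁.1 htb.le
  obtain ⟨h1, h2, h3⟩ := rho_mem_of_lt hT ⟨b₁, hb₁.2, hlt⟩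
  by_contra hcon
  have hlt' : tsRho T (sInf S) < sInf S := lt_of_le_of_ne h2 hcon
  have h4 : t₀ < tsRho T (sInf S) := htb.trans_le (h3 b₁ hb₁.2 hlt)
  refine no_top hT hq hg hloc (hin _ h1 h4.le hlt') h1 h4 ?_ ?_
  · intro t ht
    rcases le_total t₀ t with h | h
    · exact h3 t ht.2 (hup t ht.1 h)
    · exact h.trans h4.le
  · exact fun hgr => absurd (hgr.2 hbT) (not_le.2 hlt')

/-- If local solutions exist to the left of every non-minimal point, then to the left of `t₀` a
maximal solution is either defined everywhere or exactly down to a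
right-dense point `a`, exclusive: `a` is the supremum of the missing points. -/
lemma backward_dichotomy (hT : IsClosed T) (hq : IsMaxSol T Ω f t₀ q₀ q I)
    (hl : ¬ IsLeast T t₀)
    (hloc : ∀ a ∈ T, ¬ IsLeast T a → ∀ x ∈ Ω, ∃ c p, LocSol T Ω f p c a ∧ p a = x) :
    (∀ t ∈ T, t ≤ t₀ → t ∈ I) ∨
      ∃ a ∈ T, a < t₀ ∧ RightDense T a ∧ ∀ t ∈ T, t ≤ t₀ → (t ∈ I ↔ a < t) := by
  obtain ⟨hI, a₁, ha₁, b₀, hb₀, htr⟩ := hq.1.1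
  have hta : a₁ < t₀ := by
    rcases htr with ⟨h, -⟩ | ⟨-, h, -⟩ | ⟨-, -, h, -⟩
    exacts [absurd h hl, h, h]
  have ht₀I : t₀ ∈ I := hI.out ha₁.1 hb₀.1 ⟨htr.le.1, htr.le.2.1⟩
  by_cases hall : ∀ t ∈ T, t ≤ t₀ → t ∈ I
  · exact Or.inl hall
  right
  push Not at hall
  obtain ⟨s, hsT, hts, hsI⟩ := hall
  set S := {t | t ∈ T ∧ t ≤ t₀ ∧ t ∉ I} with hS
  have hSne : S.Nonempty := ⟨s, hsT, hts, hsI⟩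
  have hSa₁ : ∀ t ∈ S, t ≤ a₁ := by
    intro t ht
    by_contra hcon
    exact ht.2.2 (hI.out ha₁.1 ht₀I ⟨(not_le.1 hcon).le, ht.2.1⟩)
  have hbdd : BddAbove S := ⟨a₁, hSa₁⟩
  have haT : sSup S ∈ T :=
    closure_minimal (fun x hx => hx.1) hT (csSup_mem_closure hSne hbdd)
  have haa₁ : sSup S ≤ a₁ := csSup_le hSne hSa₁
  have hta' : sSup S < t₀ := haa₁.trans_lt hta
  have hin : ∀ t ∈ T, t ≤ t₀ → sSup S < t → t ∈ I := by
    intro t ht h1 h2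
    by_contra hcon
    exact absurd (le_csSup hbdd ⟨ht, h1, hcon⟩) (not_le.2 h2)
  have haI : sSup S ∉ I := by
    intro haI
    have hlt : ∀ x, x < sSup S → x ∉ I := by
      intro x hx hxI
      obtain ⟨y, hy, hyx⟩ := exists_lt_of_lt_csSup hSne hx
      exact hy.2.2 (hI.out hxI ht₀I ⟨hyx.le, hy.2.1⟩)
    refine no_bot hT hq hl hloc haI haT hta' ?_ ?_
    · intro t ht
      by_contra hcon
      exact hlt t (not_le.1 hcon) ht.1
    · intro hle
      have : sSup S ≤ s := hle.2 hsT
      have h2 := le_antisymm this (le_csSup hbdd ⟨hsT, hts, hsI⟩)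
      exact hsI (h2 ▸ haI)
  have hlow : ∀ t ∈ I, t ≤ t₀ → sSup S < t := by
    intro t ht h
    by_contra hcon
    exact haI (hI.out ht ht₀I ⟨not_lt.1 hcon, hta'.le⟩)
  refine ⟨sSup S, haT, hta', ?_, fun t ht h => ⟨fun h' => hlow t h' h, hin t ht h⟩⟩
  have hlt : sSup S < a₁ := hlow a₁ ha₁.1 hta.le
  obtain ⟨h1, h2, h3⟩ := sigma_mem_of_lt hT ⟨a₁, ha₁.2, hlt⟩
  by_contra hcon
  have hlt' : sSup S < tsSigma T (sSup S) := lt_of_le_of_ne h2 (Ne.symm hcon)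
  have h4 : tsSigma T (sSup S) < t₀ := (h3 a₁ ha₁.2 hlt).trans_lt hta
  refine no_bot hT hq hl hloc (hin _ h1 h4.le hlt') h1 h4 ?_ ?_
  · intro t ht
    rcases le_total t t₀ with h | h
    · exact h3 t ht.2 (hlow t ht.1 h)
    · exact h4.le.trans h
  · exact fun hle => absurd (hle.2 haT) (not_le.2 hlt')

end maximal

/-! ### Shape of the maximal interval -/

theorem stmt12 {n : ℕ}
    (T : Set ℝ) (hTclosed : IsClosed T) (hTnontriv : T.Nontrivial)
    (Ω : Set (EuclideanSpace ℝ (Fin n))) (hΩopen : IsOpen Ω) (hΩne : Ω.Nonempty)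
    (f : EuclideanSpace ℝ (Fin n) → ℝ → EuclideanSpace ℝ (Fin n)) (hf : DeltaCaratheodory T Ω f)
    (t₀ : ℝ) (ht₀ : t₀ ∈ T) (q₀ : EuclideanSpace ℝ (Fin n)) (hq₀ : q₀ ∈ Ω)
    (h1 : IsLeast T t₀ → HInfty T Ω f ∧ HrdLocLip T Ω f ∧ HforwStab T Ω f)
    (h2 : IsGreatest T t₀ → HInfty T Ω f ∧ HldLocLip T Ω f ∧ HbackRegr T Ω f)
    (h3 : ¬ IsLeast T t₀ → ¬ IsGreatest T t₀ →
      HInfty T Ω f ∧ HrdLocLip T Ω f ∧ HforwStab T Ω f ∧ HldLocLip T Ω f ∧ HbackRegr T Ω f)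
    (q : ℝ → EuclideanSpace ℝ (Fin n)) (I : Set ℝ) (hq : IsMaxSol T Ω f t₀ q₀ q I) :
    I ∩ T = T ∨
      (I ∩ T ≠ T ∧
        (IsLeast T t₀ → ∃ b ∈ T, t₀ < b ∧ LeftDense T b ∧ I ∩ T = Ico t₀ b ∩ T) ∧
        (IsGreatest T t₀ → ∃ a ∈ T, a < t₀ ∧ RightDense T a ∧ I ∩ T = Ioc a t₀ ∩ T) ∧
        (¬ IsLeast T t₀ → ¬ IsGreatest T t₀ →
          (∃ a ∈ T, a < t₀ ∧ RightDense T a ∧ I ∩ T = Ioi a ∩ T) ∨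
          (∃ b ∈ T, t₀ < b ∧ LeftDense T b ∧ I ∩ T = Iio b ∩ T) ∨
          (∃ a ∈ T, a < t₀ ∧ ∃ b ∈ T, t₀ < b ∧ RightDense T a ∧ LeftDense T b ∧
            I ∩ T = Ioo a b ∩ T))) := by
  have hF : ¬ IsGreatest T t₀ → _ := fun hg => forward_dichotomy hTclosed hq hg (by
    have h : HInfty T Ω f ∧ HrdLocLip T Ω f ∧ HforwStab T Ω f := by
      by_cases hl : IsLeast T t₀
      · exact h1 hl
      · obtain ⟨k1, k2, k3, -⟩ := h3 hl hg
        exact ⟨k1, k2, k3⟩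
    exact fun b hb hbg x hx => locSol_forward hTclosed hf h.1 h.2.1 h.2.2 hb hbg hx)
  have hB : ¬ IsLeast T t₀ → _ := fun hl => backward_dichotomy hTclosed hq hl (by
    have h : HInfty T Ω f ∧ HldLocLip T Ω f ∧ HbackRegr T Ω f := by
      by_cases hg : IsGreatest T t₀
      · exact h2 hg
      · obtain ⟨k1, -, -, k4, k5⟩ := h3 hl hg
        exact ⟨k1, k4, k5⟩
    exact fun a ha hal x hx => locSol_backward hTclosed hf h.1 h.2.1 h.2.2 ha hal hx)
  have hne : ¬ (IsLeast T t₀ ∧ IsGreatest T t₀) := by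
    rintro ⟨hl, hg⟩
    obtain ⟨x, hx, y, hy, hxy⟩ := hTnontriv
    exact hxy ((le_antisymm (hg.2 hx) (hl.2 hx)).trans (le_antisymm (hl.2 hy) (hg.2 hy)))
  by_cases hall : I ∩ T = T
  · exact Or.inl hall
  refine Or.inr ⟨hall, fun hl => ?_, fun hg => ?_, fun hl hg => ?_⟩
  · rcases hF (fun hg => hne ⟨hl, hg⟩) with h | ⟨b, hb, htb, hld, h⟩
    · exact absurd (inter_eq_right.2 fun t ht => h t ht (hl.2 ht)) hall
    · refine ⟨b, hb, htb, hld, ?_⟩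
      ext t
      exact ⟨fun ht => ⟨⟨hl.2 ht.2, (h t ht.2 (hl.2 ht.2)).1 ht.1⟩, ht.2⟩,
        fun ht => ⟨(h t ht.2 ht.1.1).2 ht.1.2, ht.2⟩⟩
  · rcases hB (fun hl => hne ⟨hl, hg⟩) with h | ⟨a, ha, hta, hrd, h⟩
    · exact absurd (inter_eq_right.2 fun t ht => h t ht (hg.2 ht)) hall
    · refine ⟨a, ha, hta, hrd, ?_⟩
      ext t
      exact ⟨fun ht => ⟨⟨(h t ht.2 (hg.2 ht.2)).1 ht.1, hg.2 ht.2⟩, ht.2⟩,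
        fun ht => ⟨(h t ht.2 ht.1.2).2 ht.1.1, ht.2⟩⟩
  · rcases hF hg with h | ⟨b, hb, htb, hld, h⟩ <;>
      rcases hB hl with k | ⟨a, ha, hta, hrd, k⟩
    · exact absurd (inter_eq_right.2 fun t ht => (le_total t₀ t).elim (h t ht) (k t ht)) hall
    · refine Or.inl ⟨a, ha, hta, hrd, ?_⟩
      ext t
      refine and_congr_left fun ht => ?_
      rcases le_total t₀ t with h' | h'
      · exact ⟨fun _ => hta.trans_le h', fun _ => h t ht h'⟩
      · exact k t ht h'
    · refine Or.inr (Or.inl ⟨b, hb, htb, hld, ?_⟩)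
      ext t
      refine and_congr_left fun ht => ?_
      rcases le_total t₀ t with h' | h'
      · exact h t ht h'
      · exact ⟨fun _ => lt_of_le_of_lt h' htb, fun _ => k t ht h'⟩
    · refine Or.inr (Or.inr ⟨a, ha, hta, b, hb, htb, hrd, hld, ?_⟩)
      ext t
      refine and_congr_left fun ht => ?_
      rcases le_total t₀ t with h' | h'
      · rw [h t ht h']
        exact ⟨fun h2 => ⟨hta.trans_le h', h2⟩, fun h2 => h2.2⟩
      · rw [k t ht h']
        exact ⟨fun h2 => ⟨h2, lt_of_le_of_lt h' htb⟩, fun h2 => h2.1⟩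

end
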